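/- arXiv:2105.03373 — 3 statements merged into one kernel-verified Lean document; each statement's English description precedes it below -/
import Mathlib

section
/- Let k > 1 be an integer and let G be a simple graph on n vertices. Suppose the edges of G are colored with n + k color classes, each of size at least 10^9 · k. Then G contains a rainbow cycle of length at most 6, or G contains a rainbow cycle of length at most n·(log k)²/(10·k^(3/2)) + 14·log k. -/
/-!
Choosing one edge of each color spanned by a vertex set `S` gives a rainbow graph on `S`, and any
cycle in it is rainbow. So it suffices to find a small `S` spanning at least `|S| + k` colors, and
to know that a graph with `N` vertices and at least `N + k` edges has a cycle of length at most
`2 (T / k) log (k + 1)`, for every `T ≥ max N k`. The bound obtained implies the second alternative.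

**Girth** (`exists_short_cycle`). Put `δ = k / T` and take a minimal nonempty `U` spanning at
least `(1 + δ)|U|` edges. By minimality every `B ⊆ U` touches at least `(1 + δ)|B|` edges of `U`.
If there is no short cycle, balls `B j` around a vertex of `U` are trees, so
`|B (j+1)| ≥ (1 + δ)|B j| + 1`, and the balls outgrow `T`.

**The set `S`** (`exists_excess_set`, `exists_rainbow_dense_set`). Put `ℓ = log k`. Call a color a
*star color* if some vertex, its center, has more than `Δ = 18000 √k` edges of that color. For a
vertex `v` let `s v` be the number of star colors centered at `v`; let `z` be the number of
vertices with `s v = 0`, `t v = s v - 1` (truncated) and `m` the number of non-star colors.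
Counting colors gives `m + ∑ t = k + z`.
Take a random set `S₀`, each vertex with probability `p = ℓ / (1800 √k)`. A star color
misses its leaves in `S₀` with probability at most `e^{-pΔ} = e^{-10ℓ}`, and by Chebyshev's
inequality a non-star color has no edge inside `S₀` with probability at most `1/14`
(`sum_wt_no_edge`: small degrees make the events nearly independent). Adding one leaf for each
missed star color gives a set `S₁` of size at most some `N` of order `n ℓ / √k`. Any `S ⊇ S₁`
spans at least `∑ v ∈ S, s v` star colors, that is, `|S| + ∑ v ∈ S, t v - |{v ∈ S : s v = 0}|`.
If `z ≤ 2N + k/2`, add to `S₁` all vertices with `s v ≠ 1` and an edge of each non-star color: the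
excess over `|S|` is `∑ t - z + m = k`. If `z` is larger, add at most `N + k + 1` vertices with
`t v > 0`, with total `t` either at least `N + k` or all of `∑ t`. At most `N` vertices with
`s v = 0` are in `S`, and in the latter case the excess is at least about
`∑ t + (11/14) m - N ≥ (11/14)(k + z) - N ≥ k`.
-/

/-! ### Short cycles in graphs with more edges than vertices -/

/-- The union of two distinct paths with common ends is a graph with at most
`p.length + q.length` edges in which paths are not unique, so it is not acyclic. -/
lemma exists_isCycle_of_two_paths {V : Type*} {H : SimpleGraph V} {u v : V}
    {p q : H.Walk u v} (hp : p.IsPath) (hq : q.IsPath) (hne : p ≠ q) :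
    ∃ (x : V) (c : H.Walk x x), c.IsCycle ∧ c.length ≤ p.length + q.length := by
  classical
  set F : Finset (Sym2 V) := p.edges.toFinset ∪ q.edges.toFinset with hF
  have hFH : ∀ e ∈ F, e ∈ H.edgeSet := by
    intro e he
    rcases Finset.mem_union.1 he with h | h
    · exact p.edges_subset_edgeSet (List.mem_toFinset.1 h)
    · exact q.edges_subset_edgeSet (List.mem_toFinset.1 h)
  set H' : SimpleGraph V := SimpleGraph.fromEdgeSet (F : Set (Sym2 V)) with hH'
  have hmem : ∀ e ∈ F, e ∈ H'.edgeSet := by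
    intro e he
    rw [hH', SimpleGraph.edgeSet_fromEdgeSet]
    exact ⟨he, H.not_isDiag_of_mem_edgeSet (hFH e he)⟩
  have hle : H' ≤ H := by
    rw [← SimpleGraph.edgeSet_subset_edgeSet, hH', SimpleGraph.edgeSet_fromEdgeSet]
    exact fun e he => hFH e he.1
  have hp' : ∀ e ∈ p.edges, e ∈ H'.edgeSet := fun e he =>
    hmem e (Finset.mem_union_left _ (List.mem_toFinset.2 he))
  have hq' : ∀ e ∈ q.edges, e ∈ H'.edgeSet := fun e he =>
    hmem e (Finset.mem_union_right _ (List.mem_toFinset.2 he))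
  have hna : ¬ H'.IsAcyclic := by
    intro hac
    have := (hac.subsingleton_path u v).elim ⟨p.transfer H' hp', hp.transfer hp'⟩
      ⟨q.transfer H' hq', hq.transfer hq'⟩
    have h2 : p.transfer H' hp' = q.transfer H' hq' := congrArg Subtype.val this
    apply hne
    apply SimpleGraph.Walk.ext_support
    have h3 := congrArg SimpleGraph.Walk.support h2
    simpa using h3
  unfold SimpleGraph.IsAcyclic at hna
  push Not at hna
  obtain ⟨x, c, hc⟩ := hna
  refine ⟨x, c.mapLe hle, (SimpleGraph.Walk.isCycle_mapLe hle).2 hc, ?_⟩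
  have h1 : (c.mapLe hle).length = c.edges.toFinset.card := by
    rw [List.toFinset_card_of_nodup hc.edges_nodup]; simp
  have h2 : c.edges.toFinset ⊆ F := by
    intro e he
    have := c.edges_subset_edgeSet (List.mem_toFinset.1 he)
    rw [hH', SimpleGraph.edgeSet_fromEdgeSet] at this
    exact this.1
  calc (c.mapLe hle).length ≤ F.card := h1 ▸ Finset.card_le_card h2
    _ ≤ p.edges.toFinset.card + q.edges.toFinset.card := Finset.card_union_le _ _
    _ ≤ p.length + q.length := by
      gcongr
      · simpa using p.edges.toFinset_card_le
      · simpa using q.edges.toFinset_card_le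

open Classical in
/-- If `H` has no cycle of length at most `2 j + 2`, the edges touching the ball of radius `j`
around `v` inject into the vertices other than `v` of the ball of radius `j + 1`: each such edge
joins its endpoint `y` farther from `v` to the vertex preceding `y` on a fixed geodesic from `v`. -/
lemma card_touching_lt_card_ball {V : Type*} [Fintype V] (H : SimpleGraph V) (v : V) (j : ℕ)
    (hno : ∀ (x : V) (c : H.Walk x x), c.IsCycle → 2 * j + 2 < c.length)
    (A : Finset (Sym2 V)) (hA : ∀ e ∈ A, e ∈ H.edgeSet ∧ ∃ x ∈ e, ∃ w : H.Walk v x, w.length ≤ j) :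
    A.card + 1 ≤ (Finset.univ.filter fun u => ∃ w : H.Walk v u, w.length ≤ j + 1).card := by
  set B := Finset.univ.filter fun u => ∃ w : H.Walk v u, w.length ≤ j + 1 with hB
  have hv : v ∈ B := by
    simp only [hB, Finset.mem_filter, Finset.mem_univ, true_and]
    exact ⟨SimpleGraph.Walk.nil, by simp⟩
  have hP : ∀ y, ∃ q : V, H.Reachable v y → ∃ P : H.Walk v y, P.IsPath ∧ P.length = H.dist v y ∧
      P.penultimate = q := by
    intro y
    by_cases h : H.Reachable v y
    · obtain ⟨P, hP, hl⟩ := h.exists_path_of_dist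
      exact ⟨P.penultimate, fun _ => ⟨P, hP, hl, rfl⟩⟩
    · exact ⟨v, fun h' => absurd h' h⟩
  choose par hpar using hP
  -- the path to `x` followed by `xy` must be the chosen geodesic to `y`; this covers the case
  -- of equal distances too, where the two paths have different lengths
  have key : ∀ x y : V, H.Adj x y → H.Reachable v x → H.dist v x ≤ H.dist v y → H.dist v x ≤ j →
      s(x, y) ∈ (B.erase v).image (fun y => s(par y, y)) := by
    intro x y hxy hx hle hxj
    have hy : H.Reachable v y := hx.trans hxy.reachable
    obtain ⟨P, hP, hPl, hPp⟩ := hpar y hy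
    obtain ⟨Q, hQ, hQl⟩ := hx.exists_path_of_dist
    have hyQ : y ∉ Q.support := by
      intro hyQ
      have h1 : (Q.takeUntil y hyQ).length < Q.length := Q.length_takeUntil_lt_length hyQ hxy.ne'
      have h2 := SimpleGraph.dist_le (Q.takeUntil y hyQ)
      omega
    have hQ' : (Q.concat hxy).IsPath := hQ.concat hyQ hxy
    have hdy : H.dist v y ≤ j + 1 := by
      have := SimpleGraph.dist_le (Q.concat hxy)
      simp at this
      omega
    have heq : P = Q.concat hxy := by
      by_contra hne
      obtain ⟨z, c, hc, hcl⟩ := exists_isCycle_of_two_paths hP hQ' hne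
      have := hno z c hc
      simp at hcl
      omega
    have hpx : par y = x := by
      rw [← hPp, heq]; simp
    rw [Finset.mem_image]
    refine ⟨y, ?_, by rw [hpx]⟩
    rw [Finset.mem_erase]
    constructor
    · rintro rfl
      rw [SimpleGraph.dist_self, Nat.le_zero] at hle
      exact hxy.ne (hx.dist_eq_zero_iff.1 hle).symm
    · simp only [hB, Finset.mem_filter, Finset.mem_univ, true_and]
      exact ⟨P, by omega⟩
  have hsub : A ⊆ (B.erase v).image (fun y => s(par y, y)) := by
    intro e he
    obtain ⟨heH, x, hxe, w, hw⟩ := hA e he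
    obtain ⟨y, rfl⟩ := hxe
    have hxy : H.Adj x y := heH
    have hx : H.Reachable v x := ⟨w⟩
    have hdx : H.dist v x ≤ j := (SimpleGraph.dist_le w).trans hw
    rcases le_total (H.dist v x) (H.dist v y) with h | h
    · exact key x y hxy hx h hdx
    · rw [Sym2.eq_swap]
      exact key y x hxy.symm (hx.trans hxy.reachable) h (h.trans hdx)
  have h1 := (Finset.card_le_card hsub).trans Finset.card_image_le
  have h2 := Finset.card_erase_add_one hv
  omega

open Classical in
/-- A graph with vertices in `S` and at least `|S| + k` edges has a cycle of length at most
`2 (T / k) log (k + 1)`, where `T ≥ max |S| k`. Allowing any such `T` keeps `k / T ≤ 1`, which is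
what `log (1 + k / T) ≥ k / T` needs. -/
lemma exists_short_cycle {V : Type*} [Fintype V] (E : Finset (Sym2 V)) (S : Finset V)
    (hdiag : ∀ e ∈ E, ¬ e.IsDiag) (hS : ∀ e ∈ E, ∀ x ∈ e, x ∈ S) (k T : ℝ) (hk : 1 ≤ k)
    (hkT : k ≤ T) (hST : (S.card : ℝ) ≤ T) (hE : (S.card : ℝ) + k ≤ E.card) :
    ∃ (x : V) (c : (SimpleGraph.fromEdgeSet (E : Set (Sym2 V))).Walk x x), c.IsCycle ∧
      (c.length : ℝ) ≤ 2 * (T / k) * Real.logb 2 (k + 1) := by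
  have hT : 0 < T := by linarith
  set δ : ℝ := k / T with hδ
  have hδ0 : 0 < δ := by positivity
  have hδ1 : δ ≤ 1 := (div_le_one hT).2 hkT
  let ins : Finset V → Finset (Sym2 V) := fun U => E.filter (fun e => ∀ x ∈ e, x ∈ U)
  -- a minimal nonempty vertex set spanning at least `(1 + δ)|U|` edges
  have hSne : S.Nonempty := by
    rw [Finset.nonempty_iff_ne_empty]
    rintro rfl
    have hE0 : E = ∅ := by
      apply Finset.eq_empty_of_forall_notMem
      intro e he
      induction e with | _ x y => exact absurd (hS _ he x (by simp)) (by simp)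
    subst hE0
    simp at hE
    linarith
  have hSin : (1 + δ) * S.card ≤ (ins S).card := by
    have : ins S = E := Finset.filter_true_of_mem hS
    rw [this]
    have : δ * S.card ≤ k := by
      rw [hδ, div_mul_eq_mul_div, div_le_iff₀ hT]
      exact mul_le_mul_of_nonneg_left hST (by linarith)
    linarith
  obtain ⟨U, hU, hUmin⟩ := Finset.exists_min_image
    (Finset.univ.filter fun U : Finset V => U.Nonempty ∧ (1 + δ) * U.card ≤ (ins U).card)
    Finset.card ⟨S, by simp [hSne, hSin]⟩
  simp only [Finset.mem_filter, Finset.mem_univ, true_and] at hU hUmin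
  obtain ⟨⟨v, hv⟩, hUe⟩ := hU
  have htouch : ∀ B ⊆ U, B.Nonempty → (1 + δ) * B.card ≤
      ((ins U).filter (fun e => ∃ x ∈ e, x ∈ B)).card := by
    intro B hBU hB
    have h1 : (ins (U \ B)).card ≤ (1 + δ) * (U \ B).card := by
      rcases (U \ B).eq_empty_or_nonempty with h | h
      · rw [h]
        have : ins ∅ = ∅ := by
          apply Finset.filter_false_of_mem
          intro e he
          induction e with | _ x y => exact fun h => absurd (h x (by simp)) (by simp)
        simp [this]
      · by_contra hcon
        have h2 := hUmin _ ⟨h, (not_le.1 hcon).le⟩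
        have h3 := Finset.card_sdiff_add_card_eq_card hBU
        have h4 := hB.card_pos
        omega
    have h2 : (ins U).card ≤ (ins (U \ B)).card +
        ((ins U).filter (fun e => ∃ x ∈ e, x ∈ B)).card := by
      rw [← Finset.card_filter_add_card_filter_not (s := ins U) (fun e => ∃ x ∈ e, x ∈ B),
        add_comm]
      gcongr
      intro e he
      simp only [ins, Finset.mem_filter, not_exists, not_and, Finset.mem_sdiff] at he ⊢
      exact ⟨he.1.1, fun x hx => ⟨he.1.2 x hx, he.2 x hx⟩⟩
    have h2' : ((ins U).card : ℝ) ≤ (ins (U \ B)).card +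
        ((ins U).filter (fun e => ∃ x ∈ e, x ∈ B)).card := by exact_mod_cast h2
    have h3 : ((U \ B).card : ℝ) + B.card = U.card := by
      exact_mod_cast Finset.card_sdiff_add_card_eq_card hBU
    rw [← h3] at hUe
    linarith
  set H : SimpleGraph V := SimpleGraph.fromEdgeSet (ins U : Set (Sym2 V)) with hH
  have hHE : H ≤ SimpleGraph.fromEdgeSet (E : Set (Sym2 V)) :=
    SimpleGraph.fromEdgeSet_mono (Finset.coe_subset.2 (Finset.filter_subset _ E))
  suffices h : ∃ (x : V) (c : H.Walk x x), c.IsCycle ∧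
      (c.length : ℝ) ≤ 2 * (T / k) * Real.logb 2 (k + 1) by
    obtain ⟨x, c, hc, hl⟩ := h
    exact ⟨x, c.mapLe hHE, (SimpleGraph.Walk.isCycle_mapLe hHE).2 hc, by simpa using hl⟩
  by_contra hno
  push Not at hno
  -- the balls of radius up to `r + 1` grow, where `2 r + 2 = 2 ⌊L⌋` is at most the claimed length
  set L : ℝ := (T / k) * Real.logb 2 (k + 1) with hL
  have hlog : 1 ≤ Real.logb 2 (k + 1) := by
    rw [Real.le_logb_iff_rpow_le (by norm_num) (by linarith)]; norm_num; linarith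
  have hL1 : 1 ≤ L := by
    have : 1 ≤ T / k := by rw [le_div_iff₀ (by linarith)]; linarith
    nlinarith
  obtain ⟨r, hr⟩ : ∃ r, ⌊L⌋₊ = r + 1 := Nat.exists_eq_succ_of_ne_zero (by
    have : 1 ≤ ⌊L⌋₊ := Nat.le_floor (by simpa using hL1)
    omega)
  have hrL : (r : ℝ) + 1 ≤ L := by
    have := Nat.floor_le (by linarith : 0 ≤ L); rw [hr] at this; push_cast at this; exact this
  have hrL' : L < r + 2 := by
    have := Nat.lt_floor_add_one L; rw [hr] at this; push_cast at this; linarith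
  let B : ℕ → Finset V := fun j => Finset.univ.filter fun u => ∃ w : H.Walk v u, w.length ≤ j
  have hBU : ∀ j, B j ⊆ U := by
    intro j u hu
    simp only [B, Finset.mem_filter, Finset.mem_univ, true_and] at hu
    obtain ⟨w, -⟩ := hu
    clear_value B
    clear htouch hUe hno
    induction w with
    | nil => exact hv
    | cons h p ih =>
      apply ih
      have h' := ((SimpleGraph.fromEdgeSet_adj _).1 h).1
      simp only [ins, Finset.coe_filter, Set.mem_ofPred_eq] at h'
      exact h'.2 _ (by simp)
  have hvB : ∀ j, v ∈ B j := fun j => by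
    simp only [B, Finset.mem_filter, Finset.mem_univ, true_and]
    exact ⟨SimpleGraph.Walk.nil, by simp⟩
  have hgrow : ∀ j ≤ r, (1 + δ) * (B j).card + 1 ≤ (B (j + 1)).card := by
    intro j hj
    have h1 := card_touching_lt_card_ball H v j ?_
      ((ins U).filter (fun e => ∃ x ∈ e, x ∈ B j)) ?_
    · have h2 := htouch (B j) (hBU j) ⟨v, hvB j⟩
      have h1' : (((ins U).filter (fun e => ∃ x ∈ e, x ∈ B j)).card : ℝ) + 1 ≤ (B (j + 1)).card := by
        exact_mod_cast h1
      linarith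
    · intro x c hc
      have := hno x c hc
      rw [mul_assoc, ← hL] at this
      have h3 : (j : ℝ) ≤ r := by exact_mod_cast hj
      have : ((2 * j + 2 : ℕ) : ℝ) < c.length := by push_cast; linarith
      exact_mod_cast this
    · intro e he
      simp only [Finset.mem_filter] at he
      obtain ⟨he, x, hx, hxB⟩ := he
      refine ⟨?_, x, hx, ?_⟩
      · rw [hH, SimpleGraph.edgeSet_fromEdgeSet]
        exact ⟨he, hdiag e (Finset.mem_filter.1 he).1⟩
      · simpa [B] using hxB
  have hsize : ∀ j ≤ r + 1, (1 + δ) ^ (j + 1) - 1 ≤ δ * (B j).card := by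
    intro j
    induction j with
    | zero =>
      intro _
      have : (1 : ℝ) ≤ (B 0).card := by exact_mod_cast Finset.card_pos.2 ⟨v, hvB 0⟩
      simp; nlinarith
    | succ j ih =>
      intro hj
      have h1 := ih (by omega)
      have h2 := hgrow j (by omega)
      rw [pow_succ]
      nlinarith [mul_le_mul_of_nonneg_left h2 hδ0.le]
  have h1 := hsize (r + 1) le_rfl
  have h2 : ((B (r + 1)).card : ℝ) ≤ T := by
    refine le_trans ?_ hST
    have hUS : U ⊆ S := by
      by_contra hUS
      obtain ⟨x, hxU, hxS⟩ := Finset.not_subset.1 hUS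
      -- a vertex outside `S` touches no edge
      have := htouch {x} (by simpa using hxU) (by simp)
      have h0 : (ins U).filter (fun e => ∃ y ∈ e, y ∈ ({x} : Finset V)) = ∅ := by
        apply Finset.filter_false_of_mem
        rintro e he ⟨y, hy, hyx⟩
        rw [Finset.mem_singleton] at hyx
        subst hyx
        exact hxS (hS e (Finset.mem_filter.1 he).1 _ hy)
      rw [h0] at this
      simp at this
      linarith
    exact_mod_cast Finset.card_le_card ((hBU _).trans hUS)
  have h3 : (1 + δ) ^ (r + 2) ≤ k + 1 := by
    have : δ * (B (r + 1)).card ≤ k := by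
      rw [hδ, div_mul_eq_mul_div, div_le_iff₀ hT]
      exact mul_le_mul_of_nonneg_left h2 (by linarith)
    linarith
  have h4 : δ ≤ Real.logb 2 (1 + δ) := by
    rw [Real.le_logb_iff_rpow_le (by norm_num) (by linarith)]
    have := rpow_one_add_le_one_add_mul_self (s := (1 : ℝ)) (by norm_num) hδ0.le hδ1
    norm_num at this
    linarith
  have h5 : (r + 2 : ℝ) * Real.logb 2 (1 + δ) ≤ Real.logb 2 (k + 1) := by
    have := Real.logb_le_logb_of_le (b := 2) (by norm_num) (by positivity) h3
    rw [Real.logb_pow] at this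
    exact_mod_cast this
  have h6 : L * δ = Real.logb 2 (k + 1) := by
    rw [hL, hδ]; field_simp
  nlinarith

/-! ### Binomial random subsets -/

/-- The probability of `S` when every vertex is chosen independently with probability `p`.
Expectations are the finite sums `∑ S, wt p S * X S`. -/
noncomputable def wt {V : Type*} [Fintype V] [DecidableEq V] (p : ℝ) (S : Finset V) : ℝ :=
  (∏ _i ∈ S, p) * ∏ _i ∈ Finset.univ \ S, (1 - p)

section
variable {V : Type*} [Fintype V] [DecidableEq V]

lemma wt_pos {p : ℝ} (h0 : 0 < p) (h1 : p < 1) (S : Finset V) : 0 < wt p S :=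
  mul_pos (Finset.prod_pos fun _ _ => h0) (Finset.prod_pos fun _ _ => by linarith)

lemma sum_wt_subset (p : ℝ) (A : Finset V) :
    ∑ S : Finset V, wt p S * (if A ⊆ S then 1 else 0) = p ^ A.card := by
  have h := Finset.prod_add (fun _ : V => p) (fun i => if i ∈ A then 0 else 1 - p) Finset.univ
  rw [Finset.powerset_univ] at h
  have hl : ∏ i : V, (p + if i ∈ A then 0 else 1 - p) = p ^ A.card := by
    rw [← Finset.prod_const, ← Finset.prod_subset (Finset.subset_univ A)]
    · exact Finset.prod_congr rfl fun i hi => by simp [hi]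
    · intro i _ hi; simp [hi]
  rw [← hl, h]
  refine Finset.sum_congr rfl fun S _ => ?_
  rw [wt, mul_assoc]
  congr 1
  split_ifs with hA
  · rw [mul_one]
    refine Finset.prod_congr rfl fun i hi => ?_
    rw [if_neg fun hiA => (Finset.mem_sdiff.1 hi).2 (hA hiA)]
  · obtain ⟨x, hx, hxS⟩ := Finset.not_subset.1 hA
    rw [mul_zero, eq_comm]
    exact Finset.prod_eq_zero (i := x) (by simp [hxS]) (by simp [hx])

lemma sum_wt_disjoint (p : ℝ) (A : Finset V) :
    ∑ S : Finset V, wt p S * (if Disjoint A S then 1 else 0) = (1 - p) ^ A.card := by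
  have h := Finset.prod_add (fun i : V => if i ∈ A then 0 else p) (fun _ => 1 - p) Finset.univ
  rw [Finset.powerset_univ] at h
  have hl : ∏ i : V, ((if i ∈ A then 0 else p) + (1 - p)) = (1 - p) ^ A.card := by
    rw [← Finset.prod_const, ← Finset.prod_subset (Finset.subset_univ A)]
    · exact Finset.prod_congr rfl fun i hi => by simp [hi]
    · intro i _ hi; simp [hi]
  rw [← hl, h]
  refine Finset.sum_congr rfl fun S _ => ?_
  rw [wt, mul_right_comm]
  congr 1
  split_ifs with hA
  · rw [mul_one]
    refine Finset.prod_congr rfl fun i hi => ?_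
    rw [if_neg fun hiA => Finset.disjoint_left.1 hA hiA hi]
  · obtain ⟨x, hx, hxS⟩ := Finset.not_disjoint_iff.1 hA
    rw [mul_zero, eq_comm]
    exact Finset.prod_eq_zero (i := x) hxS (by simp [hx])

lemma sum_wt (p : ℝ) : ∑ S : Finset V, wt p S = 1 := by
  simpa using sum_wt_subset p (∅ : Finset V)

lemma sum_wt_card (p : ℝ) : ∑ S : Finset V, wt p S * S.card = Fintype.card V * p := by
  have : ∀ S : Finset V, wt p S * (S.card : ℝ)
      = ∑ v : V, wt p S * (if ({v} : Finset V) ⊆ S then 1 else 0) := by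
    intro S
    rw [← Finset.mul_sum]
    simp
  simp_rw [this]
  rw [Finset.sum_comm]
  simp_rw [sum_wt_subset]
  simp

lemma sum_wt_card_filter (p : ℝ) (J : Finset ℕ) (Q : ℕ → Finset V → Prop)
    [∀ S, DecidablePred fun i => Q i S] :
    ∑ S : Finset V, wt p S * ((J.filter fun i => Q i S).card : ℝ) =
      ∑ i ∈ J, ∑ S : Finset V, wt p S * (if Q i S then 1 else 0) := by
  rw [Finset.sum_comm]
  refine Finset.sum_congr rfl fun S _ => ?_
  rw [← Finset.mul_sum, Finset.sum_boole]

/-- Markov's inequality for three variables at once. Each of the three ratios `X / a`, `Y / b`,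
`Z / c` has mean at most `1`, so at some `S` their sum is at most `3`. -/
lemma exists_of_expectations {p : ℝ} (h0 : 0 < p) (h1 : p < 1) (X Y Z : Finset V → ℝ)
    (hX : ∀ S, 0 ≤ X S) (hY : ∀ S, 0 ≤ Y S) (hZ : ∀ S, 0 ≤ Z S) {a b c : ℝ}
    (ha : 0 < a) (hb : 0 < b) (hc : 0 < c)
    (hXa : ∑ S, wt p S * X S ≤ a) (hYb : ∑ S, wt p S * Y S ≤ b) (hZc : ∑ S, wt p S * Z S ≤ c) :
    ∃ S, X S ≤ 3 * a ∧ Y S ≤ 3 * b ∧ Z S ≤ 3 * c := by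
  have hsum : ∑ S, wt p S * (X S / a + Y S / b + Z S / c) ≤ ∑ S : Finset V, wt p S * 3 := by
    rw [← Finset.sum_mul, sum_wt]
    have : ∑ S, wt p S * (X S / a + Y S / b + Z S / c) = (∑ S, wt p S * X S) / a
        + (∑ S, wt p S * Y S) / b + (∑ S, wt p S * Z S) / c := by
      rw [Finset.sum_div, Finset.sum_div, Finset.sum_div, ← Finset.sum_add_distrib,
        ← Finset.sum_add_distrib]
      exact Finset.sum_congr rfl fun S _ => by ring
    rw [this]
    have e1 := (div_le_one ha).2 hXa
    have e2 := (div_le_one hb).2 hYb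
    have e3 := (div_le_one hc).2 hZc
    linarith
  obtain ⟨S, -, hS⟩ := Finset.exists_le_of_sum_le Finset.univ_nonempty hsum
  have hS' := le_of_mul_le_mul_left hS (wt_pos h0 h1 S)
  have e1 := div_nonneg (hX S) ha.le
  have e2 := div_nonneg (hY S) hb.le
  have e3 := div_nonneg (hZ S) hc.le
  refine ⟨S, ?_, ?_, ?_⟩
  · rw [← div_le_iff₀ ha]; linarith
  · rw [← div_le_iff₀ hb]; linarith
  · rw [← div_le_iff₀ hc]; linarith

/-- The probability that both `e` and `f` lie in the random set, by the size of their overlap. -/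
lemma pow_card_union_le {p : ℝ} (h0 : 0 < p) (h1 : p < 1) {e f : Sym2 V}
    (he : ¬ e.IsDiag) (hf : ¬ f.IsDiag) :
    p ^ (e.toFinset ∪ f.toFinset).card ≤
      p ^ 4 + p ^ 3 * (if ∃ x ∈ e, x ∈ f then 1 else 0) + p ^ 2 * (if e = f then 1 else 0) := by
  have ce := Sym2.card_toFinset_of_not_isDiag e he
  have cf := Sym2.card_toFinset_of_not_isDiag f hf
  by_cases hef : e = f
  · subst hef
    rw [Finset.union_self, ce, if_pos rfl]
    have : 0 ≤ p ^ 4 + p ^ 3 * (if ∃ x ∈ e, x ∈ e then 1 else 0) := by positivity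
    linarith
  · rw [if_neg hef]
    split_ifs with hx
    · have h3 : 3 ≤ (e.toFinset ∪ f.toFinset).card := by
        by_contra hcon
        have e1 : e.toFinset = e.toFinset ∪ f.toFinset :=
          Finset.eq_of_subset_of_card_le Finset.subset_union_left (by omega)
        have e2 : f.toFinset = e.toFinset ∪ f.toFinset :=
          Finset.eq_of_subset_of_card_le Finset.subset_union_right (by omega)
        apply hef
        apply Sym2.ext
        intro x
        rw [← Sym2.mem_toFinset, ← Sym2.mem_toFinset, e1, ← e2]
      have := pow_le_pow_of_le_one h0.le h1.le h3
      have : 0 < p ^ 4 := by positivity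
      linarith
    · have : (e.toFinset ∪ f.toFinset).card = 4 := by
        rw [Finset.card_union_of_disjoint, ce, cf]
        rw [Finset.disjoint_left]
        intro x hxe hxf
        exact hx ⟨x, Sym2.mem_toFinset.1 hxe, Sym2.mem_toFinset.1 hxf⟩
      rw [this]; simp

/-- The second moment bound for the probability that the random set spans no edge of `F`, when
all degrees in `F` are at most `Δ`. -/
lemma sum_wt_no_edge {p Δ : ℝ} (h0 : 0 < p) (h1 : p < 1) (F : Finset (Sym2 V))
    (hF : ∀ e ∈ F, ¬ e.IsDiag) (hne : F.Nonempty)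
    (hdeg : ∀ v, ((F.filter (fun e => v ∈ e)).card : ℝ) ≤ Δ) :
    (∑ S : Finset V, wt p S * (if ∃ e ∈ F, e.toFinset ⊆ S then 0 else 1)) * (p ^ 2 * F.card)
      ≤ 2 * Δ * p + 1 := by
  set X : Finset V → ℝ := fun S => ∑ e ∈ F, if e.toFinset ⊆ S then 1 else 0 with hX
  set M : ℝ := (F.card : ℝ) with hM
  have hMpos : 0 < M := by rw [hM]; exact_mod_cast hne.card_pos
  set μ : ℝ := p ^ 2 * M with hμ
  have hEX : ∑ S, wt p S * X S = μ := by
    simp_rw [hX, Finset.mul_sum]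
    rw [Finset.sum_comm]
    simp_rw [sum_wt_subset]
    rw [Finset.sum_congr rfl fun e he => by rw [Sym2.card_toFinset_of_not_isDiag e (hF e he)]]
    simp [hμ, hM, mul_comm]
  have hEX2 : ∑ S, wt p S * (X S) ^ 2 ≤ μ ^ 2 + p ^ 3 * (M * (2 * Δ)) + p ^ 2 * M := by
    have e1 : ∀ S, wt p S * (X S) ^ 2 = ∑ e ∈ F, ∑ f ∈ F,
        wt p S * (if e.toFinset ∪ f.toFinset ⊆ S then 1 else 0) := by
      intro S
      rw [hX, sq, Finset.sum_mul_sum, Finset.mul_sum]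
      refine Finset.sum_congr rfl fun e _ => ?_
      rw [Finset.mul_sum]
      refine Finset.sum_congr rfl fun f _ => ?_
      by_cases he : e.toFinset ⊆ S <;> by_cases hf : f.toFinset ⊆ S <;>
        simp [Finset.union_subset_iff, he, hf]
    simp_rw [e1]
    rw [Finset.sum_comm]
    have e2 : ∀ e ∈ F, ∑ S, ∑ f ∈ F, wt p S * (if e.toFinset ∪ f.toFinset ⊆ S then 1 else 0)
        ≤ p ^ 4 * M + p ^ 3 * (2 * Δ) + p ^ 2 := by
      intro e he
      rw [Finset.sum_comm]
      simp_rw [sum_wt_subset]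
      refine (Finset.sum_le_sum fun f hf => pow_card_union_le h0 h1 (hF e he) (hF f hf)).trans ?_
      rw [Finset.sum_add_distrib, Finset.sum_add_distrib, ← Finset.mul_sum, ← Finset.mul_sum]
      have c1 : ∑ f ∈ F, (if e = f then (1 : ℝ) else 0) = 1 := by simp [he]
      have c2 : ∑ f ∈ F, (if ∃ x ∈ e, x ∈ f then (1 : ℝ) else 0) ≤ 2 * Δ := by
        rw [Finset.sum_boole]
        have hsub : F.filter (fun f => ∃ x ∈ e, x ∈ f) ⊆
            e.toFinset.biUnion fun x => F.filter (fun f => x ∈ f) := by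
          intro f hf
          obtain ⟨hfF, x, hx, hxf⟩ := Finset.mem_filter.1 hf
          exact Finset.mem_biUnion.2 ⟨x, Sym2.mem_toFinset.2 hx, Finset.mem_filter.2 ⟨hfF, hxf⟩⟩
        have h2 := (Finset.card_le_card hsub).trans Finset.card_biUnion_le
        have h3 : ((F.filter (fun f => ∃ x ∈ e, x ∈ f)).card : ℝ) ≤
            ∑ x ∈ e.toFinset, ((F.filter (fun f => x ∈ f)).card : ℝ) := by exact_mod_cast h2
        refine h3.trans ((Finset.sum_le_sum fun x _ => hdeg x).trans ?_)
        rw [Finset.sum_const, Sym2.card_toFinset_of_not_isDiag e (hF e he)]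
        simp
      rw [c1, Finset.sum_const, nsmul_eq_mul]
      have := mul_le_mul_of_nonneg_left c2 (by positivity : 0 ≤ p ^ 3)
      rw [← hM]
      linarith
    refine (Finset.sum_le_sum e2).trans ?_
    rw [Finset.sum_const, nsmul_eq_mul, ← hM, hμ]
    apply le_of_eq; ring
  -- Chebyshev: on the sets spanning no edge, `(X - μ)^2 = μ^2`
  have hch : (∑ S : Finset V, wt p S * (if ∃ e ∈ F, e.toFinset ⊆ S then 0 else 1)) * μ ^ 2
      ≤ ∑ S, wt p S * (X S - μ) ^ 2 := by
    rw [Finset.sum_mul]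
    refine Finset.sum_le_sum fun S _ => ?_
    rw [mul_assoc]
    refine mul_le_mul_of_nonneg_left ?_ (wt_pos h0 h1 S).le
    split_ifs with h
    · rw [zero_mul]; positivity
    · push Not at h
      have : X S = 0 := Finset.sum_eq_zero fun e he => if_neg (h e he)
      rw [this]; simp
  have hvar : ∑ S, wt p S * (X S - μ) ^ 2 = ∑ S, wt p S * (X S) ^ 2 - μ ^ 2 := by
    have : ∀ S, wt p S * (X S - μ) ^ 2 =
        wt p S * (X S) ^ 2 - (2 * μ) * (wt p S * X S) + μ ^ 2 * wt p S := fun S => by ring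
    simp_rw [this]
    rw [Finset.sum_add_distrib, Finset.sum_sub_distrib, ← Finset.mul_sum, ← Finset.mul_sum, hEX,
      sum_wt]
    ring
  have hμ0 : 0 < μ := by positivity
  rw [← mul_le_mul_iff_left₀ hμ0]
  calc _ = (∑ S : Finset V, wt p S * (if ∃ e ∈ F, e.toFinset ⊆ S then 0 else 1)) * μ ^ 2 := by ring
    _ ≤ p ^ 3 * (M * (2 * Δ)) + p ^ 2 * M := by linarith
    _ = _ := by rw [hμ]; ring

end

/-! ### A vertex set spanning more colors than vertices -/

section
variable {V : Type*} [Fintype V] [DecidableEq V]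

/-- At most `T` vertices of positive weight already have total weight `T`, or the full weight. -/
lemma exists_small_heavy (t : V → ℕ) (T : ℕ) :
    ∃ A : Finset V, (∀ v ∈ A, 0 < t v) ∧ A.card ≤ T ∧ min T (∑ v, t v) ≤ ∑ v ∈ A, t v := by
  induction T with
  | zero => exact ⟨∅, by simp⟩
  | succ T ih =>
    obtain ⟨A, hA, hAT, hsum⟩ := ih
    by_cases h : ∃ v, v ∉ A ∧ 0 < t v
    · obtain ⟨v, hv, htv⟩ := h
      refine ⟨insert v A, ?_, ?_, ?_⟩
      · intro x hx
        rcases Finset.mem_insert.1 hx with rfl | hx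
        · exact htv
        · exact hA x hx
      · rw [Finset.card_insert_of_notMem hv]; omega
      · rw [Finset.sum_insert hv]; omega
    · push Not at h
      refine ⟨A, hA, by omega, ?_⟩
      rw [Finset.sum_subset (Finset.subset_univ A) fun v _ hv => Nat.le_zero.1 (h v hv)]
      exact min_le_right _ _

/-- The colors `i ∈ I` whose class `C i` has an edge with both ends in `S`. -/
def spanned (I : Finset ℕ) (C : ℕ → Finset (Sym2 V)) (S : Finset V) : Finset ℕ :=
  I.filter fun i => ∃ e ∈ C i, e.toFinset ⊆ S

/-- From a set `S₁` that contains a leaf of every star color (`St` are the star colors, `c i` the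
center of the star color `i`) and spans most non-star colors to a set spanning at least `k` more
colors than it has vertices. -/
lemma exists_excess_set (n k : ℕ) (hk : 1 ≤ k) (hn : Fintype.card V = n)
    (C : ℕ → Finset (Sym2 V)) (I St : Finset ℕ) (hI : I.card = n + k) (hSt : St ⊆ I)
    (hC : ∀ i ∈ I, (C i).Nonempty) (c : ℕ → V) (S₁ : Finset V) (N : ℝ) (hN : (S₁.card : ℝ) ≤ N)
    (hdom : ∀ i ∈ St, ∃ u ∈ S₁, s(c i, u) ∈ C i)
    (hreal : (((I \ St).filter fun i => ¬ ∃ e ∈ C i, e.toFinset ⊆ S₁).card : ℝ) ≤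
      3 * ((I \ St).card / 14 + 1 / 100)) :
    ∃ S : Finset V, (S.card : ℝ) ≤ 7 * N + 4 * k ∧ S.card + k ≤ (spanned I C S).card := by
  set M := I \ St with hM
  let s : V → ℕ := fun v => (St.filter fun i => c i = v).card
  let t : V → ℕ := fun v => s v - 1
  let Z : Finset V := Finset.univ.filter fun v => s v = 0
  have hN0 : 0 ≤ N := le_trans (by positivity) hN
  have hst : ∀ v, s v + (if s v = 0 then 1 else 0) = 1 + t v := by
    intro v; simp only [t]; split_ifs <;> omega
  have hsumS : ∀ S : Finset V, ∑ v ∈ S, s v + (S ∩ Z).card = S.card + ∑ v ∈ S, t v := by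
    intro S
    have h := Finset.sum_congr (rfl : S = S) fun v _ => hst v
    rw [Finset.sum_add_distrib, Finset.sum_add_distrib, Finset.sum_const, smul_eq_mul, mul_one,
      ← Finset.card_filter] at h
    rw [← h]
    congr 2
    ext v; simp [Z]
  have hcount : ∀ S : Finset V, S₁ ⊆ S →
      ∑ v ∈ S, s v + (M.filter fun i => ∃ e ∈ C i, e.toFinset ⊆ S).card ≤ (spanned I C S).card := by
    intro S hS
    have h1 : ∑ v ∈ S, s v = (St.filter fun i => c i ∈ S).card := by
      rw [Finset.card_eq_sum_card_fiberwise (f := c) (t := S)]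
      · refine Finset.sum_congr rfl fun v hv => ?_
        simp only [s]
        congr 1
        ext i
        simp only [Finset.mem_filter]
        constructor
        · rintro ⟨h, rfl⟩; exact ⟨⟨h, hv⟩, rfl⟩
        · rintro ⟨⟨h, _⟩, h'⟩; exact ⟨h, h'⟩
      · intro i hi
        exact (Finset.mem_filter.1 hi).2
    rw [h1, ← Finset.card_union_of_disjoint]
    · apply Finset.card_le_card
      intro i hi
      simp only [spanned, Finset.mem_filter, Finset.mem_union, hM, Finset.mem_sdiff] at hi ⊢
      rcases hi with ⟨hi, hc⟩ | ⟨hi, h⟩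
      · refine ⟨hSt hi, ?_⟩
        obtain ⟨u, hu, he⟩ := hdom i hi
        refine ⟨_, he, fun x hx => ?_⟩
        rw [Sym2.mem_toFinset, Sym2.mem_iff] at hx
        rcases hx with rfl | rfl
        · exact hc
        · exact hS hu
      · exact ⟨hi.1, h⟩
    · rw [Finset.disjoint_left]
      intro i hi hi'
      exact (Finset.mem_sdiff.1 (Finset.mem_filter.1 hi').1).2 (Finset.mem_filter.1 hi).1
  have hglob : M.card + ∑ v, t v = k + Z.card := by
    have h1 := hsumS Finset.univ
    rw [Finset.univ_inter, Finset.card_univ, hn] at h1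
    have h2 : ∑ v, s v = St.card :=
      (Finset.card_eq_sum_card_fiberwise (f := c) (t := Finset.univ)
        (fun _ _ => Finset.mem_coe.2 (Finset.mem_univ _))).symm
    have h3 := Finset.card_sdiff_add_card_eq_card hSt
    rw [← hM] at h3
    omega
  have hglob' : (M.card : ℝ) + (∑ v, t v : ℕ) = k + Z.card := by exact_mod_cast hglob
  have hkR : (1 : ℝ) ≤ k := by exact_mod_cast hk
  -- few vertices are centers of no star color: all of them, and all non-star colors, fit in `S`
  by_cases hz : (Z.card : ℝ) ≤ 2 * N + k / 2
  · have hch : ∀ i : ℕ, ∃ e : Finset V, e.card ≤ 2 ∧ (i ∈ I → ∃ e' ∈ C i, e'.toFinset ⊆ e) := by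
      intro i
      by_cases hi : i ∈ I
      · obtain ⟨e, he⟩ := hC i hi
        refine ⟨e.toFinset, ?_, fun _ => ⟨e, he, subset_rfl⟩⟩
        rw [Sym2.card_toFinset]; split_ifs <;> omega
      · exact ⟨∅, by simp, fun h => absurd h hi⟩
    choose w hw2 hw using hch
    let P : Finset V := Finset.univ.filter fun v => 0 < t v
    let W : Finset V := M.biUnion w
    have hW : W.card ≤ M.card * 2 := Finset.card_biUnion_le_card_mul _ _ _ fun i _ => hw2 i
    have hP : P.card ≤ ∑ v, t v := by
      rw [Finset.card_filter]
      refine Finset.sum_le_sum fun v _ => ?_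
      split_ifs <;> omega
    refine ⟨S₁ ∪ Z ∪ P ∪ W, ?_, ?_⟩
    · have h1 : (S₁ ∪ Z ∪ P ∪ W).card ≤ S₁.card + Z.card + P.card + W.card := by
        refine (Finset.card_union_le _ _).trans (Nat.add_le_add_right ?_ _)
        refine (Finset.card_union_le _ _).trans (Nat.add_le_add_right ?_ _)
        exact Finset.card_union_le _ _
      have h2 : (S₁ ∪ Z ∪ P ∪ W).card ≤ S₁.card + Z.card + 2 * (k + Z.card) := by omega
      have h3 : ((S₁ ∪ Z ∪ P ∪ W).card : ℝ) ≤ S₁.card + Z.card + 2 * (k + Z.card) := by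
        exact_mod_cast h2
      linarith
    · set S := S₁ ∪ Z ∪ P ∪ W with hS
      have hS1 : S₁ ⊆ S := fun x hx => by simp [hS, hx]
      have hZ : Z ⊆ S := fun x hx => by simp [hS, hx]
      have hPS : P ⊆ S := fun x hx => by simp [hS, hx]
      have hWS : W ⊆ S := Finset.subset_union_right
      have h1 := hcount S hS1
      have h2 := hsumS S
      rw [Finset.inter_eq_right.2 hZ] at h2
      have h3 : ∑ v ∈ S, t v = ∑ v, t v := by
        refine Finset.sum_subset (Finset.subset_univ S) fun v _ hv => ?_
        by_contra h
        exact hv (hPS (by simp only [P, Finset.mem_filter, Finset.mem_univ, true_and]; omega))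
      have h4 : (M.filter fun i => ∃ e ∈ C i, e.toFinset ⊆ S) = M := by
        apply Finset.filter_true_of_mem
        intro i hi
        obtain ⟨e, he, hew⟩ := hw i (Finset.mem_sdiff.1 hi).1
        exact ⟨e, he, hew.trans ((Finset.subset_biUnion_of_mem w hi).trans hWS)⟩
      rw [h4] at h1
      omega
  · push Not at hz
    -- otherwise `m + ∑ t = k + z` is so large that `S₁` and some vertices with `t v > 0` suffice
    obtain ⟨A, hA, hAT, hAsum⟩ := exists_small_heavy t (⌈N⌉₊ + k)
    have hceil : (⌈N⌉₊ : ℝ) < N + 1 := Nat.ceil_lt_add_one hN0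
    have hceil' : N ≤ ⌈N⌉₊ := Nat.le_ceil N
    refine ⟨S₁ ∪ A, ?_, ?_⟩
    · have h1 : (S₁ ∪ A).card ≤ S₁.card + (⌈N⌉₊ + k) := (Finset.card_union_le _ _).trans (by omega)
      have h2 : ((S₁ ∪ A).card : ℝ) ≤ S₁.card + (⌈N⌉₊ + k) := by exact_mod_cast h1
      linarith
    · set S := S₁ ∪ A with hS
      have h1 := hcount S Finset.subset_union_left
      have h2 := hsumS S
      have h3 : (S ∩ Z).card ≤ S₁.card := by
        apply Finset.card_le_card
        intro v hv
        simp only [hS, Finset.mem_inter, Finset.mem_union, Z, Finset.mem_filter, Finset.mem_univ,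
          true_and] at hv
        rcases hv with ⟨hv | hv, hz⟩
        · exact hv
        · have := hA v hv
          simp only [t] at this
          omega
      have h4 : ∑ v ∈ A, t v ≤ ∑ v ∈ S, t v :=
        Finset.sum_le_sum_of_subset Finset.subset_union_right
      have h5 : (M.filter fun i => ∃ e ∈ C i, e.toFinset ⊆ S₁).card ≤
          (M.filter fun i => ∃ e ∈ C i, e.toFinset ⊆ S).card := by
        apply Finset.card_le_card
        apply Finset.monotone_filter_right
        rintro i - ⟨e, he, h⟩
        exact ⟨e, he, h.trans Finset.subset_union_left⟩
      have h6 := Finset.card_filter_add_card_filter_not (s := M)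
        (fun i => ∃ e ∈ C i, e.toFinset ⊆ S₁)
      set m₁ := (M.filter fun i => ∃ e ∈ C i, e.toFinset ⊆ S₁).card
      set m₂ := (M.filter fun i => ¬ ∃ e ∈ C i, e.toFinset ⊆ S₁).card
      have h7 : S.card + ∑ v ∈ A, t v + m₁ ≤ (spanned I C S).card + S₁.card := by omega
      have h7' : (S.card : ℝ) + (∑ v ∈ A, t v : ℕ) + m₁ ≤ (spanned I C S).card + S₁.card := by
        exact_mod_cast h7
      have h6' : (m₁ : ℝ) + m₂ = M.card := by exact_mod_cast h6
      have h8 : (S.card : ℝ) + k ≤ (spanned I C S).card := by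
        have hm1 : (0 : ℝ) ≤ m₁ := by positivity
        rcases min_le_iff.1 hAsum with h | h
        · have : (⌈N⌉₊ : ℝ) + k ≤ (∑ v ∈ A, t v : ℕ) := by exact_mod_cast h
          linarith
        · have : ((∑ v, t v : ℕ) : ℝ) ≤ (∑ v ∈ A, t v : ℕ) := by exact_mod_cast h
          have h0 : (0 : ℝ) ≤ (∑ v, t v : ℕ) := by positivity
          linarith
      exact_mod_cast h8

end

/-! ### Choice of parameters and the rainbow cycle -/

lemma exp_neg_ten_logb_le {k : ℝ} (hk : 2 ≤ k) :
    Real.exp (-(10 * Real.logb 2 k)) ≤ 1 / (8192 * Real.sqrt k) := by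
  have hk0 : 0 < k := by linarith
  have hs : Real.sqrt k ≤ k := by
    rw [Real.sqrt_le_left hk0.le]; nlinarith
  have hs0 : 0 < Real.sqrt k := Real.sqrt_pos.2 hk0
  have hl2 : Real.log 2 < 0.6931471808 := Real.log_two_lt_d9
  have hl20 : 0 < Real.log 2 := Real.log_pos (by norm_num)
  have hlk : 0 ≤ Real.log k := Real.log_nonneg (by linarith)
  -- `14 log 2 < 10`
  have h1 : 14 * Real.log k ≤ 10 * Real.logb 2 k := by
    rw [Real.logb, ← mul_div_assoc, le_div_iff₀ hl20]
    nlinarith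
  have h2 : Real.exp (14 * Real.log k) = k ^ 14 := by
    rw [mul_comm, Real.exp_mul, Real.exp_log hk0]
    exact_mod_cast Real.rpow_natCast k 14
  have h3 : 8192 * Real.sqrt k ≤ k ^ 14 := by
    have : (2 : ℝ) ^ 13 ≤ k ^ 13 := pow_le_pow_left₀ (by norm_num) hk 13
    rw [pow_succ k 13]
    norm_num at this
    nlinarith
  rw [Real.exp_neg, one_div]
  apply inv_anti₀ (by positivity)
  calc _ ≤ k ^ 14 := h3
    _ = _ := h2.symm
    _ ≤ _ := Real.exp_le_exp.2 h1

lemma logb_add_one_le {k : ℝ} (hk : 2 ≤ k) : Real.logb 2 (k + 1) ≤ 1.6 * Real.logb 2 k := by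
  have hk0 : 0 < k := by linarith
  have hl : 1 ≤ Real.logb 2 k := by
    rw [Real.le_logb_iff_rpow_le (by norm_num) hk0]; simpa using hk
  have h1 : Real.logb 2 (k + 1) ≤ Real.logb 2 (1.5 * k) :=
    Real.logb_le_logb_of_le (by norm_num) (by linarith) (by linarith)
  rw [Real.logb_mul (by norm_num) hk0.ne'] at h1
  have h2 : Real.logb 2 1.5 ≤ 0.6 := by
    have : Real.logb 2 ((1.5 : ℝ) ^ 5) ≤ Real.logb 2 ((2 : ℝ) ^ 3) :=
      Real.logb_le_logb_of_le (by norm_num) (by norm_num) (by norm_num)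
    rw [Real.logb_pow, Real.logb_pow, Real.logb_self_eq_one (by norm_num)] at this
    norm_num at this ⊢
    linarith
  linarith

open Classical in
/-- `exists_excess_set` applied to a random set with `p = log k / (1800 √k)`, completed by a leaf
of each star color it misses. The product `p Δ = 10 log k` makes the missed star colors rare,
while `Δ / p` stays small enough against `10 ^ 9 * k` for the second moment bound. -/
lemma exists_rainbow_dense_set {V : Type*} [Fintype V] [DecidableEq V] (n k : ℕ) (hk : 1 < k)
    (hn : Fintype.card V = n) (C : ℕ → Finset (Sym2 V)) (I : Finset ℕ) (hI : I.card = n + k)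
    (hdiag : ∀ i ∈ I, ∀ e ∈ C i, ¬ e.IsDiag) (hC : ∀ i ∈ I, 10 ^ 9 * k ≤ (C i).card) :
    ∃ S : Finset V, (S.card : ℝ) ≤ 7 * (n * Real.logb 2 k / (450 * Real.sqrt k)) + 4.01 * k ∧
      S.card + k ≤ (spanned I C S).card := by
  have hkR : (2 : ℝ) ≤ k := by exact_mod_cast hk
  have hk0 : (0 : ℝ) < k := by linarith
  set ℓ := Real.logb 2 k with hℓ
  set s := Real.sqrt k with hs
  have hs0 : 0 < s := Real.sqrt_pos.2 hk0
  have hss : s * s = k := Real.mul_self_sqrt hk0.le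
  have hℓ1 : 1 ≤ ℓ := by
    rw [hℓ, Real.le_logb_iff_rpow_le (by norm_num) hk0]; simpa using hkR
  have hℓs : ℓ < 1800 * s := by
    have h1 : Real.log s ≤ s - 1 := Real.log_le_sub_one_of_pos hs0
    have h2 : Real.log k = 2 * Real.log s := by rw [← hss, Real.log_mul hs0.ne' hs0.ne']; ring
    have h3 : 0.6931471803 < Real.log 2 := Real.log_two_gt_d9
    rw [hℓ, Real.logb, div_lt_iff₀ (by linarith), h2]
    nlinarith
  set p : ℝ := ℓ / (1800 * s) with hp
  set Δ : ℝ := 18000 * s with hΔ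
  have hp0 : 0 < p := by positivity
  have hp1 : p < 1 := (div_lt_one (by positivity)).2 hℓs
  have hpΔ : p * Δ = 10 * ℓ := by rw [hp, hΔ]; field_simp; norm_num
  have hCne : ∀ i ∈ I, (C i).Nonempty := fun i hi => by
    rw [← Finset.card_pos]; have := hC i hi; omega
  have hIne : I.Nonempty := by rw [← Finset.card_pos]; omega
  have hV : Nonempty V := by
    obtain ⟨i, hi⟩ := hIne
    obtain ⟨e, -⟩ := hCne i hi
    exact ⟨e.out.1⟩
  have hnpos : 0 < n := hn ▸ Fintype.card_pos
  let star : ℕ → V → Prop := fun i v => Δ < ((C i).filter (fun e => v ∈ e)).card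
  let St := I.filter fun i => ∃ v, star i v
  have hc : ∀ i, ∃ v, i ∈ St → star i v := by
    intro i
    by_cases h : i ∈ St
    · obtain ⟨v, hv⟩ := (Finset.mem_filter.1 h).2
      exact ⟨v, fun _ => hv⟩
    · exact ⟨hV.some, fun h' => absurd h' h⟩
  choose c hc using hc
  let Lf : ℕ → Finset V := fun i => Finset.univ.filter fun u => s(c i, u) ∈ C i
  have hLf : ∀ i ∈ St, Δ ≤ (Lf i).card := by
    intro i hi
    refine (hc i hi).le.trans ?_
    have : (C i).filter (fun e => c i ∈ e) ⊆ (Lf i).image fun u => s(c i, u) := by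
      intro e he
      obtain ⟨heC, u, rfl⟩ := Finset.mem_filter.1 he
      exact Finset.mem_image.2 ⟨u, by simpa [Lf] using heC, rfl⟩
    exact_mod_cast (Finset.card_le_card this).trans Finset.card_image_le
  set M := I \ St with hM
  have hMp : ∀ i ∈ M, ∑ S : Finset V, wt p S * (if ∃ e ∈ C i, e.toFinset ⊆ S then 0 else 1)
      ≤ 1 / 14 := by
    intro i hi
    obtain ⟨hiI, hiS⟩ := Finset.mem_sdiff.1 hi
    have hdeg : ∀ v, (((C i).filter (fun e => v ∈ e)).card : ℝ) ≤ Δ := by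
      intro v
      by_contra h
      exact hiS (Finset.mem_filter.2 ⟨hiI, v, not_le.1 h⟩)
    have h1 := sum_wt_no_edge hp0 hp1 (C i) (hdiag i hiI) (hCne i hiI) hdeg
    have h2 : (10 : ℝ) ^ 9 * k ≤ (C i).card := by exact_mod_cast hC i hiI
    have h3 : 308 * ℓ ^ 2 ≤ p ^ 2 * (C i).card := by
      have : p ^ 2 * (10 ^ 9 * k) = 10 ^ 9 / 1800 ^ 2 * ℓ ^ 2 := by
        rw [hp, ← hss]; field_simp
      have h4 := mul_le_mul_of_nonneg_left h2 (sq_nonneg p)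
      nlinarith [sq_nonneg ℓ]
    have h5 : 0 < p ^ 2 * (C i).card := by nlinarith
    have h6 : 2 * Δ * p + 1 ≤ 21 * ℓ ^ 2 := by nlinarith
    rw [← mul_le_mul_iff_left₀ h5]
    linarith
  have hStp : ∀ i ∈ St, ∑ S : Finset V, wt p S * (if Disjoint (Lf i) S then 1 else 0)
      ≤ Real.exp (-(10 * ℓ)) := by
    intro i hi
    rw [sum_wt_disjoint]
    have h1 : 1 - p ≤ Real.exp (-p) := by linarith [Real.add_one_le_exp (-p)]
    refine (pow_le_pow_left₀ (by linarith) h1 _).trans ?_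
    rw [← Real.exp_nat_mul]
    apply Real.exp_le_exp.2
    have := mul_le_mul_of_nonneg_left (hLf i hi) hp0.le
    linarith
  -- the summand `1 / 100` keeps the bound positive when there is no non-star color
  obtain ⟨S₀, hX, hY, hZ⟩ := exists_of_expectations hp0 hp1
    (fun S : Finset V => (S.card : ℝ))
    (fun S => ((St.filter fun i => Disjoint (Lf i) S).card : ℝ))
    (fun S => ((M.filter fun i => ¬ ∃ e ∈ C i, e.toFinset ⊆ S).card : ℝ))
    (fun _ => by positivity) (fun _ => by positivity) (fun _ => by positivity)
    (a := n * p) (b := (n + k) * Real.exp (-(10 * ℓ))) (c := M.card / 14 + 1 / 100)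
    (by positivity) (by positivity) (by positivity)
    (by rw [sum_wt_card, hn])
    (by
      refine (sum_wt_card_filter p St fun i S => Disjoint (Lf i) S).trans_le ?_
      refine (Finset.sum_le_sum hStp).trans ?_
      rw [Finset.sum_const, nsmul_eq_mul]
      gcongr
      have : St.card ≤ n + k := hI ▸ Finset.card_le_card (Finset.filter_subset _ _)
      exact_mod_cast this)
    (by
      refine (sum_wt_card_filter p M fun i S => ¬ ∃ e ∈ C i, e.toFinset ⊆ S).trans_le ?_
      have : ∀ i ∈ M, ∑ S : Finset V, wt p S * (if ¬ ∃ e ∈ C i, e.toFinset ⊆ S then 1 else 0)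
          ≤ 1 / 14 := by
        intro i hi
        simpa only [ite_not] using hMp i hi
      refine (Finset.sum_le_sum this).trans ?_
      rw [Finset.sum_const, nsmul_eq_mul]
      linarith)
  have hlf : ∀ i, ∃ u, i ∈ St → s(c i, u) ∈ C i := by
    intro i
    by_cases hi : i ∈ St
    · have h1 : 0 < ((Lf i).card : ℝ) := lt_of_lt_of_le (by positivity) (hLf i hi)
      obtain ⟨u, hu⟩ := Finset.card_pos.1 (by exact_mod_cast h1 : 0 < (Lf i).card)
      exact ⟨u, fun _ => by simpa [Lf] using hu⟩
    · exact ⟨hV.some, fun h => absurd h hi⟩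
  choose lf hlf using hlf
  set U := St.filter fun i => Disjoint (Lf i) S₀ with hU
  set E := Real.exp (-(10 * ℓ)) with hE
  set S₁ := S₀ ∪ U.image lf with hS1
  have hS1card : (S₁.card : ℝ) ≤ 3 * (n * p) + 3 * ((n + k) * E) := by
    have h1 : S₁.card ≤ S₀.card + U.card :=
      (Finset.card_union_le _ _).trans (Nat.add_le_add_left Finset.card_image_le _)
    have h2 : (S₁.card : ℝ) ≤ S₀.card + U.card := by exact_mod_cast h1
    linarith
  have hdom : ∀ i ∈ St, ∃ u ∈ S₁, s(c i, u) ∈ C i := by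
    intro i hi
    by_cases hd : Disjoint (Lf i) S₀
    · exact ⟨lf i, Finset.mem_union_right _ (Finset.mem_image_of_mem _
        (Finset.mem_filter.2 ⟨hi, hd⟩)), hlf i hi⟩
    · obtain ⟨u, hu, hu0⟩ := Finset.not_disjoint_iff.1 hd
      exact ⟨u, Finset.mem_union_left _ hu0, by simpa [Lf] using hu⟩
  obtain ⟨S, hScard, hS⟩ := exists_excess_set n k hk.le hn C I St hI (Finset.filter_subset _ _)
    hCne c S₁ _ hS1card hdom (by
      refine le_trans ?_ hZ
      have : (I \ St).filter (fun i => ¬ ∃ e ∈ C i, e.toFinset ⊆ S₁) ⊆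
          M.filter (fun i => ¬ ∃ e ∈ C i, e.toFinset ⊆ S₀) := by
        apply Finset.monotone_filter_right
        rintro i - hi ⟨e, he, heS⟩
        exact hi ⟨e, he, heS.trans Finset.subset_union_left⟩
      exact_mod_cast Finset.card_le_card this)
  refine ⟨S, hScard.trans ?_, hS⟩
  have hE1 : E ≤ 1 / (8192 * s) := exp_neg_ten_logb_le hkR
  have hs1 : 1 ≤ s := by rw [hs, Real.one_le_sqrt]; linarith
  have hE2 : 1 / (8192 * s) ≤ 1 / 8192 := by
    apply one_div_le_one_div_of_le <;> linarith
  have hE3 : E ≤ ℓ / (8192 * s) := hE1.trans (by gcongr)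
  have hn0 : (0 : ℝ) < n := by exact_mod_cast hnpos
  have e1 : (n : ℝ) * E ≤ n * (ℓ / (8192 * s)) := by gcongr
  have e2 : (k : ℝ) * E ≤ k * (1 / 8192) := by gcongr; linarith
  set q : ℝ := n * (ℓ / s) with hq
  have hq0 : 0 ≤ q := by positivity
  have e3 : n * p = q / 1800 := by rw [hq, hp]; field_simp
  have e4 : n * (ℓ / (8192 * s)) = q / 8192 := by rw [hq]; field_simp
  have e5 : n * ℓ / (450 * s) = q / 450 := by rw [hq]; field_simp
  rw [e3, e5]
  rw [e4] at e1
  linarith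

/-- Let `k > 1` be an integer and let `G` be a simple graph on `n`
vertices. Suppose the edges of `G` are colored with `n + k` color classes, each of size
at least `10^9 * k`. Then `G` contains a rainbow cycle of length at most `6`, or `G`
contains a rainbow cycle of length at most
`n * (log k)^2 / (10 * k^(3/2)) + 14 * log k` (log base 2). -/
theorem rainbow_cycle_of_n_add_k_colors {V : Type*} [Fintype V] [DecidableEq V]
    (n k : ℕ) (hk : 1 < k) (hn : Fintype.card V = n)
    (G : SimpleGraph V) [DecidableRel G.Adj] (b : Sym2 V → ℕ)
    (hsize : ∀ i, 1 ≤ i → i ≤ n + k →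
      10 ^ 9 * k ≤ (G.edgeFinset.filter (fun e => b e = i)).card)
    (hempty : ∀ i, n + k < i → G.edgeFinset.filter (fun e => b e = i) = ∅) :
    (∃ (u : V) (w : G.Walk u u), w.IsCycle ∧ (w.edges.map b).Nodup ∧ w.length ≤ 6) ∨
    (∃ (u : V) (w : G.Walk u u), w.IsCycle ∧ (w.edges.map b).Nodup ∧
      (w.length : ℝ) ≤ (n : ℝ) * (Real.logb 2 k) ^ 2 / (10 * (k : ℝ) ^ ((3 : ℝ) / 2))
        + 14 * Real.logb 2 k) := by
  right
  set C : ℕ → Finset (Sym2 V) := fun i => G.edgeFinset.filter (fun e => b e = i) with hCdef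
  have hCmem : ∀ {i e}, e ∈ C i → e ∈ G.edgeSet ∧ b e = i := fun {i e} he => by
    simpa [hCdef] using he
  obtain ⟨S, hScard, hS⟩ := exists_rainbow_dense_set n k hk hn C (Finset.Icc 1 (n + k))
    (by simp) (fun i _ e he => G.not_isDiag_of_mem_edgeSet (hCmem he).1)
    (fun i hi => hsize i (Finset.mem_Icc.1 hi).1 (Finset.mem_Icc.1 hi).2)
  set R := spanned (Finset.Icc 1 (n + k)) C S with hR
  have hRe : ∀ i ∈ R, ∃ e ∈ C i, e.toFinset ⊆ S := fun i hi => (Finset.mem_filter.1 hi).2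
  obtain ⟨i₀, hi₀⟩ : R.Nonempty := by rw [← Finset.card_pos]; omega
  have : Nonempty (Sym2 V) := ⟨(hRe i₀ hi₀).choose⟩
  choose! φ hφC hφS using hRe
  have hbφ : ∀ i ∈ R, b (φ i) = i := fun i hi => (hCmem (hφC i hi)).2
  set E := R.image φ with hE
  have hEcard : E.card = R.card := Finset.card_image_of_injOn fun i hi j hj hij => by
    rw [← hbφ i hi, ← hbφ j hj, hij]
  have hEG : ∀ e ∈ E, e ∈ G.edgeSet := by
    intro e he
    obtain ⟨i, hi, rfl⟩ := Finset.mem_image.1 he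
    exact (hCmem (hφC i hi)).1
  have hbE : ∀ e ∈ E, ∀ f ∈ E, b e = b f → e = f := by
    intro e he f hf hef
    obtain ⟨i, hi, rfl⟩ := Finset.mem_image.1 he
    obtain ⟨j, hj, rfl⟩ := Finset.mem_image.1 hf
    rw [hbφ i hi, hbφ j hj] at hef
    rw [hef]
  have hkR : (2 : ℝ) ≤ k := by exact_mod_cast hk
  have hk0 : (0 : ℝ) < k := by linarith
  set ℓ := Real.logb 2 k with hℓ
  set s := Real.sqrt k with hs
  have hs0 : 0 < s := Real.sqrt_pos.2 hk0
  have hss : s * s = k := Real.mul_self_sqrt hk0.le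
  have hℓ1 : 1 ≤ ℓ := by
    rw [hℓ, Real.le_logb_iff_rpow_le (by norm_num) hk0]; simpa using hkR
  have hq0 : 0 ≤ n * ℓ / (450 * s) := by positivity
  set T := 7 * (n * ℓ / (450 * s)) + 4.01 * k with hT
  obtain ⟨x, c, hc, hlen⟩ := exists_short_cycle E S
    (fun e he => G.not_isDiag_of_mem_edgeSet (hEG e he))
    (fun e he y hy => by
      obtain ⟨i, hi, rfl⟩ := Finset.mem_image.1 he
      exact hφS i hi (Sym2.mem_toFinset.2 hy))
    k T (by linarith) (by linarith) hScard (by rw [hEcard]; exact_mod_cast hS)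
  have hcE : ∀ e ∈ c.edges, e ∈ E := by
    intro e he
    have := c.edges_subset_edgeSet he
    rw [SimpleGraph.edgeSet_fromEdgeSet] at this
    exact this.1
  have hle : SimpleGraph.fromEdgeSet (E : Set (Sym2 V)) ≤ G := by
    rw [← SimpleGraph.edgeSet_subset_edgeSet, SimpleGraph.edgeSet_fromEdgeSet]
    exact fun e he => hEG e he.1
  refine ⟨x, c.mapLe hle, (SimpleGraph.Walk.isCycle_mapLe hle).2 hc, ?_, ?_⟩
  · have hedges : (c.mapLe hle).edges = c.edges := by simp
    rw [hedges]
    exact List.Nodup.map_on (fun e he f hf => hbE e (hcE e he) f (hcE f hf)) hc.edges_nodup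
  · have h1 : ((c.mapLe hle).length : ℝ) = c.length := by simp
    rw [h1]
    refine hlen.trans ?_
    have h2 : Real.logb 2 (k + 1) ≤ 1.6 * ℓ := logb_add_one_le hkR
    have hpow : (k : ℝ) ^ ((3 : ℝ) / 2) = s * k := by
      rw [hs, Real.sqrt_eq_rpow]
      nth_rewrite 3 [← Real.rpow_one (k : ℝ)]
      rw [← Real.rpow_add hk0]; norm_num
    rw [hpow]
    have hTk : 0 ≤ T / k := by positivity
    have h3 : 2 * (T / k) * Real.logb 2 (k + 1) ≤ 2 * (T / k) * (1.6 * ℓ) := by gcongr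
    refine h3.trans ?_
    set Q : ℝ := n * ℓ ^ 2 / (s * k) with hQ
    have hQ0 : 0 ≤ Q := by positivity
    have e1 : 2 * (T / k) * (1.6 * ℓ) = 2 * 1.6 * 7 / 450 * Q + 2 * 1.6 * 4.01 * ℓ := by
      rw [hT, hQ]; field_simp
    have e2 : n * ℓ ^ 2 / (10 * (s * k)) = Q / 10 := by rw [hQ]; field_simp
    rw [e1, e2]
    norm_num
    linarith
end

section
/- Let k > 1 be an integer and let G be a simple graph on n vertices. Suppose the edges of G are colored with n + k color classes, each of size at least 10^9 · k, and suppose additionally that 140·k^(3/2)/log k ≤ n. Then G contains a rainbow cycle of length at most n·(log k)²/(5·k^(3/2)). -/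
/-!
If a vertex set `S` spans at least `|S| + k` colors, then picking one edge of each color inside `S`
gives a rainbow graph with `|S|` vertices and at least `|S| + k` edges. Such a graph has a cycle of
length at most about `2 (|S| / k + 1) ln (1 + k)` (`exists_rainbow_cycle_of_set`). Indeed, a vertex
set minimal among those with edge density at least `1 + λ`, `λ = k / |S|`, loses at least `1 + λ`
edges per vertex when a ball is deleted, so balls that span no cycle grow by a factor `1 + λ` with
every step (`ball_growth`, `exists_short_cycle_of_pow`).

It remains to find `S` with `|S| ≤ 14 p n + 9 k`, where `p = log k / (1000 √k)`
(`exists_good_set`). Call a color a star color if some vertex, its center, is in at least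
`D ≈ 20000 √k` of its edges, and consider a random set `S₀` containing each vertex with
probability `p`.

* A color that is not a star color has an edge inside `S₀` with probability at least `9/10`, by the
  second moment method (`expect_miss_le`). If there are more than about `(10/9) (p n + k)` such
  colors, a random set already spans enough of them.
* Otherwise these colors are few, and both ends of one edge of each can be added to `S₀`. A star
  color has no leaf in `S₀` with probability at most `(1 - p) ^ D ≤ p / 2`, so adding a leaf of
  every missed star is also cheap. In the resulting set `S₁`, and in every larger set, each color
  that is not a star color is present, and each star color is present as soon as its center is.
  A vertex at which `a v` stars are centered thus contributes `a v - 1` to the excess of colors over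
  vertices. The total excess over all vertices is `k`, and a small set containing `S₁` whose excess
  is at least `k` is found by adding vertices with `2 ≤ a v` and, if necessary, those with `a v = 0`
  (`exists_enlarge`).
-/

/-! ### Short cycles in sparse graphs -/

open Classical in
/-- The ball of radius `i` around `v` in the graph whose edges are the members of `F` lying
inside `A`. -/
noncomputable def rball {V : Type*} (F : Finset (Sym2 V)) (A : Finset V) (v : V) : ℕ → Finset V
  | 0 => {v}
  | i + 1 => rball F A v i ∪ A.filter (fun x => ∃ y ∈ rball F A v i, s(y, x) ∈ F)

open Classical in
/-- The members of `F` with both ends in `A`. -/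
noncomputable def insideEdges {V : Type*} (F : Finset (Sym2 V)) (A : Finset V) :
    Finset (Sym2 V) := F.filter (fun e => ∀ x ∈ e, x ∈ A)

theorem rball_subset {V : Type*} (F : Finset (Sym2 V)) (A : Finset V) (v : V) (hv : v ∈ A)
    (i : ℕ) : rball F A v i ⊆ A := by
  classical
  induction i with
  | zero => simpa [rball] using hv
  | succ i ih =>
    rw [rball]
    exact Finset.union_subset ih (Finset.filter_subset _ _)

theorem mem_rball {V : Type*} (F : Finset (Sym2 V)) (A : Finset V) (v : V) (i : ℕ) :
    v ∈ rball F A v i := by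
  classical
  induction i with
  | zero => simp [rball]
  | succ i ih => rw [rball]; exact Finset.mem_union_left _ ih

/-- A breadth-first search tree of the ball: it has fewer edges than the ball has vertices, and it
joins every vertex of the ball to the centre by a walk of length at most `i`. -/
theorem exists_bfs_tree {V : Type*} (G : SimpleGraph V) (F : Finset (Sym2 V))
    (hF : ∀ e ∈ F, e ∈ G.edgeSet) (A : Finset V) (v : V) (i : ℕ) :
    ∃ E ⊆ F, E.card + 1 ≤ (rball F A v i).card ∧
      ∀ x ∈ rball F A v i, ∃ w : G.Walk v x, w.length ≤ i ∧ ∀ e ∈ w.edges, e ∈ E := by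
  classical
  induction i with
  | zero =>
    refine ⟨∅, by simp, by simp [rball], ?_⟩
    intro x hx
    obtain rfl : x = v := by simpa [rball] using hx
    exact ⟨SimpleGraph.Walk.nil, by simp, by simp⟩
  | succ i ih =>
    obtain ⟨E, hEF, hcard, hE⟩ := ih
    set B := rball F A v i with hB
    set N := A.filter (fun x => ∃ y ∈ B, s(y, x) ∈ F) \ B with hN
    have hpar : ∀ x ∈ N, ∃ y ∈ B, s(y, x) ∈ F := by
      intro x hx
      simp only [hN, Finset.mem_sdiff, Finset.mem_filter] at hx
      exact hx.1.2
    choose! par hparB hparF using hpar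
    have hball : rball F A v (i + 1) = B ∪ N := by
      rw [rball, hN, Finset.union_sdiff_self_eq_union]
    refine ⟨E ∪ N.image (fun x => s(par x, x)), ?_, ?_, ?_⟩
    · refine Finset.union_subset hEF ?_
      intro e he
      obtain ⟨x, hx, rfl⟩ := Finset.mem_image.1 he
      exact hparF x hx
    · have h1 : (E ∪ N.image (fun x => s(par x, x))).card ≤ E.card + N.card :=
        (Finset.card_union_le _ _).trans (Nat.add_le_add_left Finset.card_image_le _)
      have h2 : (B ∪ N).card = B.card + N.card :=
        Finset.card_union_of_disjoint Finset.disjoint_sdiff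
      rw [hball, h2]
      omega
    · intro x hx
      rw [hball, Finset.mem_union] at hx
      rcases hx with hx | hx
      · obtain ⟨w, hw, hwE⟩ := hE x hx
        exact ⟨w, by omega, fun e he => Finset.mem_union_left _ (hwE e he)⟩
      · obtain ⟨w, hw, hwE⟩ := hE (par x) (hparB x hx)
        have hadj : G.Adj (par x) x := hF _ (hparF x hx)
        refine ⟨w.concat hadj, by simp; omega, ?_⟩
        intro e he
        rw [SimpleGraph.Walk.edges_concat, List.concat_eq_append, List.mem_append] at he
        rcases he with he | he
        · exact Finset.mem_union_left _ (hwE e he)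
        · refine Finset.mem_union_right _ (Finset.mem_image.2 ⟨x, hx, ?_⟩)
          exact (List.mem_singleton.1 he).symm

/-- A ball spanning at least as many edges as it has vertices spans an edge outside its search
tree, and that edge closes up a cycle of length at most `2 * i + 1`. -/
theorem exists_cycle_of_ball {V : Type*} (G : SimpleGraph V) (F : Finset (Sym2 V))
    (hF : ∀ e ∈ F, e ∈ G.edgeSet) (A : Finset V) (v : V) (i : ℕ)
    (hcard : (rball F A v i).card ≤ (insideEdges F (rball F A v i)).card) :
    ∃ (u : V) (w : G.Walk u u), w.IsCycle ∧ (∀ e ∈ w.edges, e ∈ F) ∧ w.length ≤ 2 * i + 1 := by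
  classical
  obtain ⟨E, hEF, hE1, hE⟩ := exists_bfs_tree G F hF A v i
  obtain ⟨e, heF, heE⟩ : ∃ e ∈ insideEdges F (rball F A v i), e ∉ E :=
    Finset.exists_mem_notMem_of_card_lt_card (by omega)
  simp only [insideEdges, Finset.mem_filter] at heF
  obtain ⟨heF, hin⟩ := heF
  induction e using Sym2.ind with
  | _ x y =>
    obtain ⟨wx, hx, hxE⟩ := hE x (hin x (by simp))
    obtain ⟨wy, hy, hyE⟩ := hE y (hin y (by simp))
    have hadj : G.Adj x y := hF _ heF
    set w := wy.reverse.append wx with hw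
    have hwE : ∀ e ∈ w.bypass.edges, e ∈ E := by
      intro e he
      have := w.edges_bypass_subset_edges he
      rw [hw, SimpleGraph.Walk.edges_append, SimpleGraph.Walk.edges_reverse, List.mem_append,
        List.mem_reverse] at this
      exact this.elim (hyE e) (hxE e)
    refine ⟨x, SimpleGraph.Walk.cons hadj w.bypass, ?_, ?_, ?_⟩
    · rw [SimpleGraph.Walk.cons_isCycle_iff]
      exact ⟨w.bypass_isPath, fun h => heE (hwE _ h)⟩
    · intro e he
      rw [SimpleGraph.Walk.edges_cons, List.mem_cons] at he
      rcases he with rfl | he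
      · exact heF
      · exact hEF (hwE e he)
    · have h1 := w.length_bypass_le_length
      have h2 : w.length = wy.length + wx.length := by simp [hw]
      simp only [SimpleGraph.Walk.length_cons]
      omega

/-- Deleting a ball from a set that is minimal among those of edge density at least `1 + l`
destroys at least `1 + l` edges per deleted vertex, and all of these lie in the next ball. -/
theorem ball_growth {V : Type*} (F : Finset (Sym2 V)) (A : Finset V) (v : V)
    (hv : v ∈ A) (l : ℝ) (hA : (1 + l) * A.card ≤ (insideEdges F A).card)
    (hmin : ∀ A' ⊂ A, A'.Nonempty → ((insideEdges F A').card : ℝ) < (1 + l) * A'.card) (i : ℕ) :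
    (1 + l) * (rball F A v i).card ≤ (insideEdges F (rball F A v (i + 1))).card := by
  classical
  set B := rball F A v i with hB
  have hBA : B ⊆ A := rball_subset F A v hv i
  have hvB : v ∈ B := mem_rball F A v i
  have hsub : insideEdges F A ⊆
      insideEdges F (A \ B) ∪ insideEdges F (rball F A v (i + 1)) := by
    intro e he
    simp only [insideEdges, Finset.mem_filter, Finset.mem_union] at he ⊢
    obtain ⟨heF, hin⟩ := he
    by_cases h : ∀ x ∈ e, x ∈ A \ B
    · exact Or.inl ⟨heF, h⟩
    · right
      refine ⟨heF, ?_⟩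
      push Not at h
      obtain ⟨x, hxe, hx⟩ := h
      have hxB : x ∈ B := by
        by_contra hxB
        exact hx (Finset.mem_sdiff.2 ⟨hin x hxe, hxB⟩)
      intro y hy
      rw [rball, Finset.mem_union]
      by_cases hxy : y = x
      · left; rw [hxy]; exact hxB
      · right
        have : e = s(x, y) := ((Sym2.mem_and_mem_iff (Ne.symm hxy)).1 ⟨hxe, hy⟩)
        exact Finset.mem_filter.2 ⟨hin y hy, x, hxB, this ▸ heF⟩
  have h1 : ((insideEdges F A).card : ℝ) ≤
      (insideEdges F (A \ B)).card + (insideEdges F (rball F A v (i + 1))).card := by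
    exact_mod_cast (Finset.card_le_card hsub).trans (Finset.card_union_le _ _)
  have h2 : ((insideEdges F (A \ B)).card : ℝ) ≤ (1 + l) * (A \ B).card := by
    rcases Finset.eq_empty_or_nonempty (A \ B) with h | h
    · have : insideEdges F (A \ B) = ∅ := by
        rw [h, insideEdges, Finset.filter_eq_empty_iff]
        intro e _ hin
        exact absurd (hin _ (Sym2.out_fst_mem e)) (by simp)
      rw [this, h]; simp
    · refine (hmin _ ?_ h).le
      refine Finset.ssubset_iff_subset_ne.2 ⟨Finset.sdiff_subset, fun heq => ?_⟩
      have : v ∈ A \ B := by rw [heq]; exact hv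
      exact (Finset.mem_sdiff.1 this).2 hvB
  have h3 : ((A \ B).card : ℝ) = A.card - B.card := by
    rw [Finset.card_sdiff_of_subset hBA, Nat.cast_sub (Finset.card_le_card hBA)]
  rw [h3] at h2
  linarith

/-- A Moore-type bound for sparse graphs. In a set that is minimal among those of density at least
`1 + l`, a ball spanning a forest satisfies `|B (i + 1)| ≥ (1 + l) |B i| + 1`, which by radius `r`
exceeds the number of available vertices. -/
theorem exists_short_cycle_of_pow {V : Type*} (G : SimpleGraph V) (F : Finset (Sym2 V))
    (hF : ∀ e ∈ F, e ∈ G.edgeSet) (S : Finset V) (hS : S.Nonempty) (l : ℝ) (hl : 0 < l)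
    (hcard : (1 + l) * S.card ≤ (insideEdges F S).card) (r : ℕ)
    (hr : 1 + l * S.card < (1 + l) ^ (r + 1)) :
    ∃ (u : V) (w : G.Walk u u), w.IsCycle ∧ (∀ e ∈ w.edges, e ∈ F) ∧ w.length ≤ 2 * r + 1 := by
  classical
  by_contra hno
  have hnoi : ∀ i ≤ r, ∀ A v, (insideEdges F (rball F A v i)).card + 1 ≤ (rball F A v i).card := by
    intro i hi A v
    by_contra hlt
    obtain ⟨u, w, h1, h2, h3⟩ := exists_cycle_of_ball G F hF A v i (by omega)
    exact hno ⟨u, w, h1, h2, by omega⟩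
  obtain ⟨A, hAm, hAmin⟩ := Finset.exists_min_image
    (S.powerset.filter (fun A => A.Nonempty ∧ (1 + l) * A.card ≤ (insideEdges F A).card))
    Finset.card ⟨S, by simp [hS, hcard]⟩
  simp only [Finset.mem_filter, Finset.mem_powerset] at hAm hAmin
  obtain ⟨hAS, ⟨v, hv⟩, hA⟩ := hAm
  have hmin : ∀ A' ⊂ A, A'.Nonempty → ((insideEdges F A').card : ℝ) < (1 + l) * A'.card := by
    intro A' hA' hne
    by_contra hle
    have := hAmin A' ⟨hA'.subset.trans hAS, hne, not_lt.1 hle⟩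
    have := Finset.card_lt_card hA'
    omega
  have key : ∀ i ≤ r, (1 + l) ^ (i + 1) ≤ 1 + l * (rball F A v i).card := by
    intro i
    induction i with
    | zero => intro _; simp [rball]
    | succ i ih =>
      intro hi
      have h1 := ih (by omega)
      have h2 := ball_growth F A v hv l hA hmin i
      have h3 : ((insideEdges F (rball F A v (i + 1))).card : ℝ) + 1 ≤
          (rball F A v (i + 1)).card := by exact_mod_cast hnoi (i + 1) hi A v
      rw [pow_succ]
      nlinarith
  have h1 := key r le_rfl
  have h2 : ((rball F A v r).card : ℝ) ≤ S.card := by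
    exact_mod_cast Finset.card_le_card ((rball_subset F A v hv r).trans hAS)
  nlinarith

/-- With `l = k / |S|` the ball growth argument stops at radius at most
`log (1 + k) / log (1 + l) ≤ log (1 + k) * (|S| / k + 1)`. -/
theorem exists_short_cycle_s2 {V : Type*} (G : SimpleGraph V) (F : Finset (Sym2 V))
    (hF : ∀ e ∈ F, e ∈ G.edgeSet) (S : Finset V) (hFS : ∀ e ∈ F, ∀ x ∈ e, x ∈ S)
    (k : ℕ) (hk : 0 < k) (hcard : S.card + k ≤ F.card) :
    ∃ (u : V) (w : G.Walk u u), w.IsCycle ∧ (∀ e ∈ w.edges, e ∈ F) ∧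
      (w.length : ℝ) ≤ 2 * (Real.log (1 + k) * (S.card / k + 1)) + 1 := by
  classical
  have hin : insideEdges F S = F := by
    rw [insideEdges, Finset.filter_eq_self]; exact hFS
  have hS : S.Nonempty := by
    obtain ⟨e, he⟩ : F.Nonempty := by rw [← Finset.card_pos]; omega
    exact ⟨_, hFS e he _ (Sym2.out_fst_mem e)⟩
  have hS0 : (0 : ℝ) < S.card := by exact_mod_cast hS.card_pos
  have hk0 : (0 : ℝ) < k := by exact_mod_cast hk
  set l : ℝ := k / S.card with hl
  have hl0 : 0 < l := by positivity
  have hlS : l * S.card = k := by rw [hl]; field_simp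
  set t : ℝ := Real.log (1 + k) / Real.log (1 + l) with ht
  have hlog : 0 < Real.log (1 + l) := Real.log_pos (by linarith)
  have hlogk : 0 < Real.log (1 + k) := Real.log_pos (by linarith)
  have ht0 : 0 ≤ t := by positivity
  have hr : 1 + l * S.card < (1 + l) ^ (⌊t⌋₊ + 1) := by
    rw [hlS]
    have h1 : t < (⌊t⌋₊ + 1 : ℕ) := by exact_mod_cast Nat.lt_floor_add_one t
    rw [ht, div_lt_iff₀ hlog, ← Real.log_pow] at h1
    exact (Real.log_lt_log_iff (by linarith) (by positivity)).1 h1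
  obtain ⟨u, w, h1, h2, h3⟩ := exists_short_cycle_of_pow G F hF S hS l hl0
    (by
      rw [hin, add_mul, hlS, one_mul]; exact_mod_cast hcard) _ hr
  refine ⟨u, w, h1, h2, ?_⟩
  have h4 : (w.length : ℝ) ≤ 2 * ⌊t⌋₊ + 1 := by exact_mod_cast h3
  have h5 : (⌊t⌋₊ : ℝ) ≤ t := Nat.floor_le ht0
  -- `log (1 + l) ≥ l / (1 + l)`
  have h6 : l / (1 + l) ≤ Real.log (1 + l) := by
    have := Real.one_sub_inv_le_log_of_pos (x := 1 + l) (by linarith)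
    calc l / (1 + l) = 1 - (1 + l)⁻¹ := by field_simp; ring
      _ ≤ _ := this
  have h7 : t ≤ Real.log (1 + k) * (S.card / k + 1) := by
    rw [ht, div_le_iff₀ hlog]
    have h8 : (S.card / k + 1 : ℝ) * (l / (1 + l)) = 1 := by
      rw [hl]; field_simp
    have h9 : 1 ≤ (S.card / k + 1 : ℝ) * Real.log (1 + l) := by
      calc (1 : ℝ) = (S.card / k + 1 : ℝ) * (l / (1 + l)) := h8.symm
        _ ≤ _ := mul_le_mul_of_nonneg_left h6 (by positivity)
    nlinarith
  linarith

/-- If a vertex set spans more colors than vertices, choosing one edge of each color gives a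
rainbow graph to which the girth bound applies. -/
theorem exists_rainbow_cycle_of_set {V : Type*} (G : SimpleGraph V) (b : Sym2 V → ℕ)
    (S : Finset V) (C : Finset ℕ) (k : ℕ) (hk : 0 < k) (hcard : S.card + k ≤ C.card)
    (hC : ∀ c ∈ C, ∃ e ∈ G.edgeSet, b e = c ∧ ∀ x ∈ e, x ∈ S) :
    ∃ (u : V) (w : G.Walk u u), w.IsCycle ∧ (w.edges.map b).Nodup ∧
      (w.length : ℝ) ≤ 2 * (Real.log (1 + k) * (S.card / k + 1)) + 1 := by
  classical
  have : Nonempty (Sym2 V) := by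
    obtain ⟨c, hc⟩ : C.Nonempty := by rw [← Finset.card_pos]; omega
    exact ⟨(hC c hc).choose⟩
  choose! e heG heb heS using hC
  have hinj : Set.InjOn e C := fun c hc c' hc' h => by rw [← heb c hc, ← heb c' hc', h]
  obtain ⟨u, w, h1, h2, h3⟩ := exists_short_cycle_s2 G (C.image e) (by simpa using heG) S
    (by simpa using heS) k hk (by rwa [Finset.card_image_of_injOn hinj])
  refine ⟨u, w, h1, ?_, h3⟩
  refine List.Nodup.map_on ?_ h1.isTrail.edges_nodup
  intro x hx y hy hxy
  obtain ⟨c, hc, rfl⟩ := Finset.mem_image.1 (h2 x hx)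
  obtain ⟨c', hc', rfl⟩ := Finset.mem_image.1 (h2 y hy)
  rw [heb c hc, heb c' hc'] at hxy
  rw [hxy]

/-! ### Random vertex sets -/

/-- The expectation of `f S` for a random `S ⊆ V` that contains each vertex independently with
probability `p`. -/
noncomputable def expect {V : Type*} [Fintype V] [DecidableEq V] (p : ℝ) (f : Finset V → ℝ) : ℝ :=
  ∑ S : Finset V, p ^ S.card * (1 - p) ^ (Finset.univ \ S).card * f S

theorem expect_add {V : Type*} [Fintype V] [DecidableEq V] (p : ℝ) (f g : Finset V → ℝ) :
    expect p (fun S => f S + g S) = expect p f + expect p g := by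
  simp only [expect, mul_add, Finset.sum_add_distrib]

theorem expect_mul {V : Type*} [Fintype V] [DecidableEq V] (p c : ℝ) (f : Finset V → ℝ) :
    expect p (fun S => c * f S) = c * expect p f := by
  simp only [expect, Finset.mul_sum]
  exact Finset.sum_congr rfl fun S _ => by ring

theorem expect_sum {V ι : Type*} [Fintype V] [DecidableEq V] (p : ℝ) (s : Finset ι)
    (f : ι → Finset V → ℝ) :
    expect p (fun S => ∑ i ∈ s, f i S) = ∑ i ∈ s, expect p (f i) := by
  simp only [expect, Finset.mul_sum]
  exact Finset.sum_comm

theorem expect_mono {V : Type*} [Fintype V] [DecidableEq V] (p : ℝ) (h0 : 0 ≤ p) (h1 : p ≤ 1)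
    (f g : Finset V → ℝ) (h : ∀ S, f S ≤ g S) : expect p f ≤ expect p g := by
  have h1' : 0 ≤ 1 - p := by linarith
  exact Finset.sum_le_sum fun S _ => mul_le_mul_of_nonneg_left (h S) (by positivity)

/-- The product formula behind independence. It comes from expanding `∏ v, (x v + y v)`, where
`x v` is `p` or `0` and `y v` is `1 - p` or `0` according to the constraints at `v`. -/
theorem expect_subset_disjoint {V : Type*} [Fintype V] [DecidableEq V] (p : ℝ) (A B : Finset V)
    (hAB : Disjoint A B) :
    expect p (fun S => if A ⊆ S ∧ Disjoint B S then 1 else 0) = p ^ A.card * (1 - p) ^ B.card := by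
  have h := Finset.prod_add (fun v : V => if v ∈ B then 0 else p)
    (fun v : V => if v ∈ A then 0 else 1 - p) Finset.univ
  have hL : ∏ v : V, ((if v ∈ B then 0 else p) + (if v ∈ A then 0 else 1 - p)) =
      p ^ A.card * (1 - p) ^ B.card := by
    have : ∀ v : V, ((if v ∈ B then 0 else p) + (if v ∈ A then 0 else 1 - p)) =
        (if v ∈ A then p else 1) * (if v ∈ B then 1 - p else 1) := by
      intro v
      by_cases hA : v ∈ A
      · have hB : v ∉ B := Finset.disjoint_left.1 hAB hA
        simp [hA, hB]
      · by_cases hB : v ∈ B <;> simp [hA, hB]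
    rw [Finset.prod_congr rfl fun v _ => this v, Finset.prod_mul_distrib]
    simp [Finset.prod_ite_mem]
  rw [← hL, h, Finset.powerset_univ, expect]
  refine Finset.sum_congr rfl fun S _ => ?_
  by_cases hS : A ⊆ S ∧ Disjoint B S
  · rw [if_pos hS, mul_one]
    congr 1
    · rw [Finset.prod_congr rfl (g := fun _ => p), Finset.prod_const]
      intro v hv
      rw [if_neg (fun hB => Finset.disjoint_left.1 hS.2 hB hv)]
    · rw [Finset.prod_congr rfl (g := fun _ => 1 - p), Finset.prod_const]
      intro v hv
      rw [if_neg (fun hA => (Finset.mem_sdiff.1 hv).2 (hS.1 hA))]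
  · rw [if_neg hS, mul_zero]
    symm
    rw [not_and_or] at hS
    rcases hS with hS | hS
    · obtain ⟨v, hvA, hvS⟩ := Finset.not_subset.1 hS
      rw [Finset.prod_eq_zero (i := v) (s := Finset.univ \ S) (by simpa using hvS) (by simp [hvA]),
        mul_zero]
    · obtain ⟨v, hvB, hvS⟩ := Finset.not_disjoint_iff.1 hS
      rw [Finset.prod_eq_zero (i := v) (s := S) hvS (by simp [hvB]), zero_mul]

theorem expect_subset {V : Type*} [Fintype V] [DecidableEq V] (p : ℝ) (A : Finset V) :
    expect p (fun S => if A ⊆ S then 1 else 0) = p ^ A.card := by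
  simpa using expect_subset_disjoint p A ∅ (by simp)

theorem expect_disjoint {V : Type*} [Fintype V] [DecidableEq V] (p : ℝ) (B : Finset V) :
    expect p (fun S => if Disjoint B S then 1 else 0) = (1 - p) ^ B.card := by
  simpa using expect_subset_disjoint p ∅ B (by simp)

theorem expect_const {V : Type*} [Fintype V] [DecidableEq V] (p c : ℝ) :
    expect p (fun _ : Finset V => c) = c := by
  have h := expect_subset p (∅ : Finset V)
  have := expect_mul p c (fun S : Finset V => if ∅ ⊆ S then 1 else 0)
  rw [h] at this
  simpa using this

theorem expect_card {V : Type*} [Fintype V] [DecidableEq V] (p : ℝ) :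
    expect p (fun S : Finset V => (S.card : ℝ)) = p * Fintype.card V := by
  have h : ∀ S : Finset V, (S.card : ℝ) = ∑ v : V, if {v} ⊆ S then 1 else 0 := by
    intro S; simp
  rw [funext h, expect_sum, Finset.sum_congr rfl fun v _ => expect_subset p {v}]
  simp [mul_comm]

theorem exists_le_of_expect_le {V : Type*} [Fintype V] [DecidableEq V] (p : ℝ) (h0 : 0 ≤ p)
    (h1 : p ≤ 1) (f : Finset V → ℝ) (c : ℝ) (h : expect p f ≤ c) : ∃ S, f S ≤ c := by
  by_contra! hno
  obtain ⟨S₀, hS₀⟩ := Finite.exists_min f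
  have := expect_mono p h0 h1 (fun _ => f S₀) f hS₀
  rw [expect_const] at this
  linarith [hno S₀]

open Classical in
/-- Chebyshev's inequality for the number of edges inside a random vertex set, for a set `E` of
edges of maximum degree at most `D`: with probability at least `9/10` there is such an edge. Pairs
of disjoint edges are uncorrelated, and each edge meets at most `2 * D` edges of `E`. -/
theorem expect_miss_le {V : Type*} [Fintype V] [DecidableEq V] (p : ℝ) (h0 : 0 < p) (h1 : p ≤ 1)
    (E : Finset (Sym2 V)) (hE : ∀ e ∈ E, ¬ e.IsDiag) (D : ℕ)
    (hD : ∀ v, (E.filter (fun e => v ∈ e)).card ≤ D)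
    (hp : 10 * (1 + 2 * D * p) ≤ E.card * p ^ 2) :
    expect p (fun S => if ∃ e ∈ E, e.toFinset ⊆ S then (0 : ℝ) else 1) ≤ 1 / 10 := by
  set M : ℝ := (E.card : ℝ) with hM
  set X : Finset V → ℝ := fun S => ∑ e ∈ E, if e.toFinset ⊆ S then 1 else 0 with hX
  have hcard : ∀ e ∈ E, e.toFinset.card = 2 := fun e he =>
    Sym2.card_toFinset_of_not_isDiag e (hE e he)
  have hEX : expect p X = M * p ^ 2 := by
    rw [hX, expect_sum, Finset.sum_congr rfl (g := fun _ => p ^ 2)]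
    · simp [hM]
    · intro e he
      rw [expect_subset, hcard e he]
  have hEX2 : expect p (fun S => X S * X S) ≤ M ^ 2 * p ^ 4 + M * (2 * D * p ^ 3) + M * p ^ 2 := by
    have hXX : ∀ S, X S * X S =
        ∑ e ∈ E, ∑ f ∈ E, if e.toFinset ∪ f.toFinset ⊆ S then 1 else 0 := by
      intro S
      rw [hX, Finset.sum_mul_sum]
      refine Finset.sum_congr rfl fun e _ => Finset.sum_congr rfl fun f _ => ?_
      simp only [Finset.union_subset_iff]
      by_cases h : e.toFinset ⊆ S <;> by_cases h' : f.toFinset ⊆ S <;> simp [h, h']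
    rw [funext hXX, expect_sum]
    have hrow : ∀ e ∈ E, expect p
        (fun S => ∑ f ∈ E, if e.toFinset ∪ f.toFinset ⊆ S then (1 : ℝ) else 0) ≤
        M * p ^ 4 + 2 * D * p ^ 3 + p ^ 2 := by
      intro e he
      rw [expect_sum]
      have hterm : ∀ f ∈ E, expect p (fun S => if e.toFinset ∪ f.toFinset ⊆ S then (1 : ℝ) else 0) ≤
          p ^ 4 + (∑ v ∈ e.toFinset, if v ∈ f then p ^ 3 else 0) + (if f = e then p ^ 2 else 0) := by
        intro f hf
        rw [expect_subset]
        have hsum0 : 0 ≤ ∑ v ∈ e.toFinset, if v ∈ f then p ^ 3 else 0 :=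
          Finset.sum_nonneg fun v _ => by split_ifs <;> positivity
        by_cases hfe : f = e
        · subst hfe
          rw [Finset.union_self, hcard f hf, if_pos rfl]
          have : 0 ≤ p ^ 4 := by positivity
          linarith
        rw [if_neg hfe, add_zero]
        by_cases hdis : Disjoint e.toFinset f.toFinset
        · rw [Finset.card_union_of_disjoint hdis, hcard e he, hcard f hf]
          exact le_add_of_nonneg_right hsum0
        · have h3 : 3 ≤ (e.toFinset ∪ f.toFinset).card := by
            by_contra hlt
            have h2 : (e.toFinset ∪ f.toFinset).card ≤ 2 := by omega
            have e1 := Finset.eq_of_subset_of_card_le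
              (Finset.subset_union_left (s₁ := e.toFinset) (s₂ := f.toFinset))
              (by rw [hcard e he]; exact h2)
            have e2 := Finset.eq_of_subset_of_card_le
              (Finset.subset_union_right (s₁ := e.toFinset) (s₂ := f.toFinset))
              (by rw [hcard f hf]; exact h2)
            apply hfe
            refine Sym2.ext fun x => ?_
            rw [← Sym2.mem_toFinset, ← Sym2.mem_toFinset, e2, ← e1]
          obtain ⟨v, hve, hvf⟩ := Finset.not_disjoint_iff.1 hdis
          have hs : p ^ 3 ≤ ∑ v ∈ e.toFinset, if v ∈ f then p ^ 3 else 0 := by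
            have := Finset.single_le_sum (f := fun v => if v ∈ f then p ^ 3 else 0)
              (fun v _ => by split_ifs <;> positivity) hve
            simpa [Sym2.mem_toFinset.1 hvf] using this
          have : p ^ (e.toFinset ∪ f.toFinset).card ≤ p ^ 3 :=
            pow_le_pow_of_le_one h0.le h1 h3
          have : 0 ≤ p ^ 4 := by positivity
          linarith
      refine (Finset.sum_le_sum hterm).trans ?_
      rw [Finset.sum_add_distrib, Finset.sum_add_distrib, Finset.sum_comm]
      have hs1 : ∑ f ∈ E, p ^ 4 = M * p ^ 4 := by simp [hM]
      have hs2 : ∑ v ∈ e.toFinset, ∑ f ∈ E, (if v ∈ f then p ^ 3 else 0) ≤ 2 * D * p ^ 3 := by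
        have : ∀ v ∈ e.toFinset, ∑ f ∈ E, (if v ∈ f then p ^ 3 else 0) ≤ D * p ^ 3 := by
          intro v _
          rw [← Finset.sum_filter, Finset.sum_const, nsmul_eq_mul]
          have : ((E.filter (fun e => v ∈ e)).card : ℝ) ≤ D := by exact_mod_cast hD v
          exact mul_le_mul_of_nonneg_right this (by positivity)
        refine (Finset.sum_le_sum this).trans ?_
        rw [Finset.sum_const, hcard e he, nsmul_eq_mul]
        push_cast; linarith
      have hs3 : ∑ f ∈ E, (if f = e then p ^ 2 else 0) = p ^ 2 := by
        rw [Finset.sum_ite_eq' E e, if_pos he]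
      rw [hs1, hs3]
      linarith
    refine (Finset.sum_le_sum hrow).trans (le_of_eq ?_)
    rw [Finset.sum_const, nsmul_eq_mul]
    ring
  set μ : ℝ := M * p ^ 2 with hμ
  have hpt : ∀ S, μ ^ 2 * (if ∃ e ∈ E, e.toFinset ⊆ S then (0 : ℝ) else 1) ≤
      X S * X S + ((-2 * μ) * X S + μ ^ 2) := by
    intro S
    split_ifs with h
    · nlinarith [sq_nonneg (X S - μ)]
    · have : X S = 0 := by
        rw [hX]
        refine Finset.sum_eq_zero fun e he => if_neg fun hs => h ⟨e, he, hs⟩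
      rw [this]; simp
  have hfin := expect_mono p h0.le h1 _ _ hpt
  rw [expect_mul, expect_add, expect_add, expect_mul, expect_const, hEX] at hfin
  set Q := expect p (fun S => if ∃ e ∈ E, e.toFinset ⊆ S then (0 : ℝ) else 1) with hQ
  have hμ0 : 0 < μ := by
    have : 0 ≤ (D : ℝ) * p := by positivity
    nlinarith
  have h4 : μ ^ 2 * Q ≤ μ * (1 + 2 * D * p) := by
    have : M ^ 2 * p ^ 4 = μ ^ 2 := by rw [hμ]; ring
    have h5 : M * (2 * D * p ^ 3) + M * p ^ 2 = μ * (1 + 2 * D * p) := by rw [hμ]; ring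
    nlinarith
  have h5 : μ * Q ≤ 1 + 2 * D * p := by
    have : μ * (μ * Q) ≤ μ * (1 + 2 * D * p) := by nlinarith
    exact le_of_mul_le_mul_left this hμ0
  by_contra hlt
  push Not at hlt
  nlinarith

/-! ### Enlarging a vertex set to gain excess colors -/

/-- With `a v` star colors centered at `v` and `m` other colors, a set `S₁` can be enlarged so
that the star colors centered in it, together with the other colors, exceed it in number by at
least `k`. Vertices with `2 ≤ a v` are added until they make up for `S₁` and `k`; if they cannot,
there are few of them, hence also few vertices with `a v = 0`, and adding all vertices of both
kinds leaves out only vertices with `a v = 1`, which do not affect the excess. -/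
theorem exists_enlarge {V : Type*} [Fintype V] [DecidableEq V] (a : V → ℕ) (m k : ℕ)
    (hsum : ∑ v, a v + m = Fintype.card V + k) (S₁ : Finset V) :
    ∃ S, S₁ ⊆ S ∧ S.card + k ≤ m + ∑ v ∈ S, a v ∧ S.card ≤ 3 * S₁.card + m + k := by
  set T : Finset V := Finset.univ.filter (fun v => 2 ≤ a v) with hT
  have hT2 : ∀ v ∈ T, 2 ≤ a v := fun v hv => (Finset.mem_filter.1 hv).2
  -- a set of vertices with two or more star colors each pays for `S₁` and the excess `k`
  have enlarge : ∀ T' ⊆ T, S₁.card + k + T'.card ≤ ∑ v ∈ T', a v →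
      T'.card ≤ S₁.card + k →
      ∃ S, S₁ ⊆ S ∧ S.card + k ≤ m + ∑ v ∈ S, a v ∧ S.card ≤ 3 * S₁.card + m + k := by
    intro T' _ h1 h2
    have h3 := Finset.card_union_le S₁ T'
    have h4 : ∑ v ∈ T', a v ≤ ∑ v ∈ S₁ ∪ T', a v :=
      Finset.sum_le_sum_of_subset Finset.subset_union_right
    exact ⟨S₁ ∪ T', Finset.subset_union_left, by omega, by omega⟩
  have hdouble : ∀ T' ⊆ T, 2 * T'.card ≤ ∑ v ∈ T', a v := by
    intro T' hT'
    rw [mul_comm, ← smul_eq_mul]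
    exact Finset.card_nsmul_le_sum _ _ _ fun v hv => hT2 v (hT' hv)
  by_cases hbig : S₁.card + k ≤ T.card
  · obtain ⟨T', hT', hc⟩ := Finset.exists_subset_card_eq hbig
    exact enlarge T' hT' (by have := hdouble T' hT'; omega) (by omega)
  by_cases hexc : S₁.card + k + T.card ≤ ∑ v ∈ T, a v
  · exact enlarge T subset_rfl hexc (by omega)
  set Z : Finset V := Finset.univ.filter (fun v => a v = 0) with hZ
  set U : Finset V := Finset.univ.filter (fun v => a v = 1) with hU
  have hTZ : Disjoint T Z := by
    rw [Finset.disjoint_left]; intro v h1 h2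
    have := hT2 v h1
    have := (Finset.mem_filter.1 h2).2
    omega
  have hTZU : Disjoint (T ∪ Z) U := by
    rw [Finset.disjoint_left]; intro v h1 h2
    have h3 := (Finset.mem_filter.1 h2).2
    rcases Finset.mem_union.1 h1 with h1 | h1
    · have := hT2 v h1; omega
    · have := (Finset.mem_filter.1 h1).2; omega
  have hall : T ∪ Z ∪ U = Finset.univ := by
    ext v
    simp only [hT, hZ, hU, Finset.mem_union, Finset.mem_filter, Finset.mem_univ, true_and, iff_true]
    omega
  have hsumZ : ∑ v ∈ Z, a v = 0 := Finset.sum_eq_zero fun v hv => (Finset.mem_filter.1 hv).2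
  have hsumU : ∀ U' ⊆ U, ∑ v ∈ U', a v = U'.card := by
    intro U' h
    rw [Finset.sum_congr rfl fun v hv => (Finset.mem_filter.1 (h hv)).2]
    simp
  have e1 : ∑ v, a v = ∑ v ∈ T, a v + U.card := by
    rw [← hall, Finset.sum_union hTZU, Finset.sum_union hTZ, hsumZ, hsumU U subset_rfl, add_zero]
  have e2 : Fintype.card V = T.card + Z.card + U.card := by
    rw [← Finset.card_univ, ← hall, Finset.card_union_of_disjoint hTZU,
      Finset.card_union_of_disjoint hTZ]
  have hS : S₁ ⊆ T ∪ Z ∪ (U ∩ S₁) := by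
    intro v hv
    have : v ∈ T ∪ Z ∪ U := by rw [hall]; simp
    simp only [Finset.mem_union, Finset.mem_inter] at this ⊢
    tauto
  have hd : Disjoint (T ∪ Z) (U ∩ S₁) := hTZU.mono_right Finset.inter_subset_left
  have c1 : (T ∪ Z ∪ (U ∩ S₁)).card = T.card + Z.card + (U ∩ S₁).card := by
    rw [Finset.card_union_of_disjoint hd, Finset.card_union_of_disjoint hTZ]
  have c2 : ∑ v ∈ T ∪ Z ∪ (U ∩ S₁), a v = ∑ v ∈ T, a v + (U ∩ S₁).card := by
    rw [Finset.sum_union hd, Finset.sum_union hTZ, hsumZ, hsumU _ Finset.inter_subset_left,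
      add_zero]
  have c3 : (U ∩ S₁).card ≤ S₁.card := Finset.card_le_card Finset.inter_subset_right
  exact ⟨_, hS, by omega, by omega⟩

/-! ### Vertex sets spanning many colors -/

open Classical in
/-- The edges of color `c` at `v` are counted by their other ends. -/
theorem card_star_le {V : Type*} [Fintype V] (G : SimpleGraph V) (b : Sym2 V → ℕ) (c : ℕ) (v : V) :
    ((G.edgeFinset.filter (fun e => b e = c)).filter (fun e => v ∈ e)).card ≤
      (Finset.univ.filter (fun w => G.Adj v w ∧ b s(v, w) = c)).card := by
  refine le_trans (Finset.card_le_card ?_) (Finset.card_image_le (f := fun w => s(v, w)))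
  intro e he
  simp only [Finset.mem_filter, SimpleGraph.mem_edgeFinset] at he
  obtain ⟨⟨heG, hb⟩, hv⟩ := he
  obtain ⟨w, rfl⟩ := Sym2.mem_iff_exists.1 hv
  exact Finset.mem_image.2 ⟨w, by simpa using ⟨heG, hb⟩, rfl⟩

open Classical in
/-- A set `S` of vertices that spans at least `|S| + k` colors and has size of order
`p n + ν + k`. The hypothesis `hcol` feeds Chebyshev's inequality for colors of maximum degree
less than `D`; `hbad` says that a random set is expected to miss at most `p n` stars of size `D`;
`hν` makes `ν` colors of small maximum degree sufficient on their own. -/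
theorem exists_good_set {V : Type*} [Fintype V] (G : SimpleGraph V)
    (b : Sym2 V → ℕ) (k : ℕ) (hk : 0 < k) (p : ℝ) (h0 : 0 < p) (h1 : p ≤ 1) (D ν : ℕ) (hD : 0 < D)
    (hcol : ∀ c ∈ Finset.Icc 1 (Fintype.card V + k),
      10 * (1 + 2 * D * p) ≤ (G.edgeFinset.filter (fun e => b e = c)).card * p ^ 2)
    (hbad : ((Fintype.card V : ℝ) + k) * (1 - p) ^ D ≤ p * Fintype.card V)
    (hν : p * Fintype.card V + k ≤ 9 / 10 * ν) :
    ∃ (S : Finset V) (C : Finset ℕ), S.card + k ≤ C.card ∧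
      (∀ c ∈ C, ∃ e ∈ G.edgeSet, b e = c ∧ ∀ x ∈ e, x ∈ S) ∧
      (S.card : ℝ) ≤ 6 * (p * Fintype.card V) + 7 * (ν - 1) + k := by
  have h1' : 0 ≤ 1 - p := by linarith
  have hk1 : (1 : ℝ) ≤ k := by exact_mod_cast hk
  have hpn : 0 ≤ p * Fintype.card V := by positivity
  set n := Fintype.card V with hn
  set E : ℕ → Finset (Sym2 V) := fun c => G.edgeFinset.filter (fun e => b e = c) with hE
  have hEG : ∀ c, ∀ e ∈ E c, e ∈ G.edgeSet ∧ b e = c := by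
    intro c e he
    simpa [hE] using he
  have hdiag : ∀ c, ∀ e ∈ E c, ¬ e.IsDiag := fun c e he =>
    G.not_isDiag_of_mem_edgeSet (hEG c e he).1
  set P : ℕ → Prop := fun c => ∃ v, D ≤ ((E c).filter (fun e => v ∈ e)).card with hP
  set St := (Finset.Icc 1 (n + k)).filter P with hSt
  set NS := (Finset.Icc 1 (n + k)).filter (fun c => ¬ P c) with hNS
  have hcards : St.card + NS.card = n + k := by
    rw [hSt, hNS, Finset.card_filter_add_card_filter_not, Nat.card_Icc]; omega
  by_cases hcase : ν ≤ NS.card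
  · -- many colors without a large star: a random set already spans enough of them
    obtain ⟨N', hN', hNc⟩ := Finset.exists_subset_card_eq hcase
    have hmiss : ∀ c ∈ N',
        expect p (fun S => if ∃ e ∈ E c, e.toFinset ⊆ S then (0 : ℝ) else 1) ≤ 1 / 10 := by
      intro c hc
      obtain ⟨hcI, hcP⟩ := Finset.mem_filter.1 (hN' hc)
      simp only [hP, not_exists, not_le] at hcP
      exact expect_miss_le p h0 h1 (E c) (hdiag c) D (fun v => (hcP v).le) (hcol c hcI)
    obtain ⟨S, hS⟩ := exists_le_of_expect_le p h0.le h1 (fun S : Finset V => (S.card : ℝ) +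
      ∑ c ∈ N', if ∃ e ∈ E c, e.toFinset ⊆ S then (0 : ℝ) else 1) (p * n + ν * (1 / 10)) (by
        rw [expect_add, expect_card, expect_sum]
        have := Finset.sum_le_sum hmiss
        rw [Finset.sum_const, hNc, nsmul_eq_mul] at this
        linarith)
    have hsum : ∑ c ∈ N', (if ∃ e ∈ E c, e.toFinset ⊆ S then (0 : ℝ) else 1) +
        (N'.filter (fun c => ∃ e ∈ E c, e.toFinset ⊆ S)).card = ν := by
      rw [← hNc, Finset.card_filter, Nat.cast_sum, ← Finset.sum_add_distrib]
      rw [Finset.card_eq_sum_ones, Nat.cast_sum]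
      refine Finset.sum_congr rfl fun c _ => ?_
      split_ifs <;> simp
    have hs0 : 0 ≤ ∑ c ∈ N', (if ∃ e ∈ E c, e.toFinset ⊆ S then (0 : ℝ) else 1) :=
      Finset.sum_nonneg fun c _ => by split_ifs <;> norm_num
    refine ⟨S, N'.filter (fun c => ∃ e ∈ E c, e.toFinset ⊆ S), ?_, ?_, ?_⟩
    · have : (S.card : ℝ) + k ≤ (N'.filter (fun c => ∃ e ∈ E c, e.toFinset ⊆ S)).card := by
        linarith
      exact_mod_cast this
    · intro c hc
      obtain ⟨_, e, he, heS⟩ := Finset.mem_filter.1 hc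
      exact ⟨e, (hEG c e he).1, (hEG c e he).2, fun x hx => heS (Sym2.mem_toFinset.2 hx)⟩
    · linarith
  · push Not at hcase
    have hNSν : (NS.card : ℝ) ≤ ν - 1 := by
      have : NS.card + 1 ≤ ν := hcase
      have : (NS.card : ℝ) + 1 ≤ ν := by exact_mod_cast this
      linarith
    -- Few colors without a large star. The set `S₁` is a random set `S₀`, a leaf of each star that
    -- `S₀` misses, and both ends of an edge of each color without a large star.
    have hstar : ∀ c ∈ St, ∃ v, D ≤ (Finset.univ.filter
        (fun w => G.Adj v w ∧ b s(v, w) = c)).card := by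
      intro c hc
      obtain ⟨v, hv⟩ := (Finset.mem_filter.1 hc).2
      exact ⟨v, hv.trans (card_star_le G b c v)⟩
    have hedge : ∀ c ∈ NS, ∃ e, e ∈ E c := by
      intro c hc
      have := hcol c (Finset.mem_filter.1 hc).1
      by_contra hno
      have hem : E c = ∅ := Finset.eq_empty_of_forall_notMem fun e he => hno ⟨e, he⟩
      have h2 : 0 ≤ 2 * (D : ℝ) * p := by positivity
      change 10 * (1 + 2 * D * p) ≤ (E c).card * p ^ 2 at this
      rw [hem] at this
      simp at this
      linarith
    have hVne : Nonempty V := by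
      rcases Finset.eq_empty_or_nonempty St with h | ⟨c, hc⟩
      · rcases Finset.eq_empty_or_nonempty NS with h' | ⟨c, hc⟩
        · rw [h, h'] at hcards; simp at hcards; omega
        · obtain ⟨e, _⟩ := hedge c hc
          exact ⟨(Quot.out e).1⟩
      · exact ⟨(hstar c hc).choose⟩
    have : Nonempty (Sym2 V) := ⟨s(hVne.some, hVne.some)⟩
    choose! f hf using hstar
    choose! ε hε using hedge
    set L : ℕ → Finset V := fun c => Finset.univ.filter
      (fun w => G.Adj (f c) w ∧ b s(f c, w) = c) with hL
    have hLD : ∀ c ∈ St, D ≤ (L c).card := hf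
    have hleaf : ∀ c ∈ St, ∃ w, w ∈ L c := fun c hc =>
      Finset.card_pos.1 (hD.trans_le (hLD c hc))
    choose! leaf hleaf using hleaf
    obtain ⟨S₀, hS₀⟩ := exists_le_of_expect_le p h0.le h1 (fun S : Finset V => (S.card : ℝ) +
      ∑ c ∈ St, if Disjoint (L c) S then (1 : ℝ) else 0) (2 * (p * n)) (by
        rw [expect_add, expect_card, expect_sum]
        have h2 : ∀ c ∈ St, expect p (fun S => if Disjoint (L c) S then (1 : ℝ) else 0) ≤
            (1 - p) ^ D := by
          intro c hc
          rw [expect_disjoint]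
          exact pow_le_pow_of_le_one h1' (by linarith) (hLD c hc)
        have h3 := Finset.sum_le_sum h2
        rw [Finset.sum_const, nsmul_eq_mul] at h3
        have h4 : (St.card : ℝ) ≤ n + k := by
          have : St.card ≤ n + k := by omega
          exact_mod_cast this
        have h5 : (St.card : ℝ) * (1 - p) ^ D ≤ (n + k) * (1 - p) ^ D :=
          mul_le_mul_of_nonneg_right h4 (by positivity)
        linarith)
    set Bd := St.filter (fun c => Disjoint (L c) S₀) with hBd
    have hBdc : ∑ c ∈ St, (if Disjoint (L c) S₀ then (1 : ℝ) else 0) = Bd.card := by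
      rw [hBd, Finset.card_filter, Nat.cast_sum]
      exact Finset.sum_congr rfl fun c _ => by split_ifs <;> simp
    set S₁ := (S₀ ∪ Bd.image leaf) ∪ NS.biUnion (fun c => (ε c).toFinset) with hS₁
    have hS₁c : S₁.card ≤ S₀.card + Bd.card + NS.card * 2 := by
      refine (Finset.card_union_le _ _).trans (add_le_add ?_ ?_)
      · exact (Finset.card_union_le _ _).trans (Nat.add_le_add_left Finset.card_image_le _)
      · refine Finset.card_biUnion_le_card_mul _ _ _ fun c hc => ?_
        exact (Sym2.card_toFinset_of_not_isDiag _ (hdiag c _ (hε c hc))).le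
    have hS₁r : (S₁.card : ℝ) ≤ 2 * (p * n) + 2 * NS.card := by
      have : (S₁.card : ℝ) ≤ S₀.card + Bd.card + NS.card * 2 := by exact_mod_cast hS₁c
      rw [hBdc] at hS₀
      linarith
    have hfib : ∀ T : Finset V, ∑ v ∈ T, (St.filter (fun c => f c = v)).card =
        (St.filter (fun c => f c ∈ T)).card := by
      intro T
      rw [Finset.card_eq_sum_card_fiberwise (s := St.filter (fun c => f c ∈ T)) (f := f) (t := T)
        (fun c hc => (Finset.mem_filter.1 hc).2)]
      refine Finset.sum_congr rfl fun v hv => ?_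
      congr 1
      ext c
      constructor <;> intro h <;> obtain ⟨h1, h2⟩ := Finset.mem_filter.1 h
      · exact Finset.mem_filter.2 ⟨Finset.mem_filter.2 ⟨h1, h2 ▸ hv⟩, h2⟩
      · exact Finset.mem_filter.2 ⟨(Finset.mem_filter.1 h1).1, h2⟩
    obtain ⟨S, hS₁S, hSk, hSc⟩ := exists_enlarge
      (fun v => (St.filter (fun c => f c = v)).card) NS.card k (by
        rw [hfib]; simpa using hcards) S₁
    refine ⟨S, NS ∪ St.filter (fun c => f c ∈ S), ?_, ?_, ?_⟩
    · rw [hfib] at hSk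
      rw [Finset.card_union_of_disjoint]
      · exact hSk
      · rw [Finset.disjoint_left]
        intro c hc hc'
        exact (Finset.mem_filter.1 hc).2 (Finset.mem_filter.1 (Finset.mem_filter.1 hc').1).2
    · intro c hc
      rcases Finset.mem_union.1 hc with hc | hc
      · refine ⟨ε c, (hEG c _ (hε c hc)).1, (hEG c _ (hε c hc)).2, fun x hx => hS₁S ?_⟩
        exact Finset.mem_union_right _ (Finset.mem_biUnion.2 ⟨c, hc, Sym2.mem_toFinset.2 hx⟩)
      · obtain ⟨hcS, hfc⟩ := Finset.mem_filter.1 hc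
        obtain ⟨w, hwL, hwS⟩ : ∃ w ∈ L c, w ∈ S₁ := by
          by_cases hd : Disjoint (L c) S₀
          · refine ⟨leaf c, hleaf c hcS, Finset.mem_union_left _ (Finset.mem_union_right _ ?_)⟩
            exact Finset.mem_image_of_mem _ (Finset.mem_filter.2 ⟨hcS, hd⟩)
          · obtain ⟨w, hw, hw'⟩ := Finset.not_disjoint_iff.1 hd
            exact ⟨w, hw, Finset.mem_union_left _ (Finset.mem_union_left _ hw')⟩
        obtain ⟨hadj, hb⟩ := (Finset.mem_filter.1 hwL).2
        refine ⟨s(f c, w), hadj, hb, fun x hx => ?_⟩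
        rcases Sym2.mem_iff.1 hx with rfl | rfl
        · exact hfc
        · exact hS₁S hwS
    · have : (S.card : ℝ) ≤ 3 * S₁.card + NS.card + k := by exact_mod_cast hSc
      linarith

/-! ### Numerical estimates -/

/-- It follows from `(1 + k) ^ 5 ≤ k ^ 8` and `1.6 * log 2 < 1.11`. -/
theorem log_one_add_le (k : ℕ) (hk : 1 < k) :
    Real.log (1 + k) ≤ 1.11 * Real.logb 2 k := by
  have hk2 : (2 : ℝ) ≤ k := by exact_mod_cast hk
  have hpow : (1 + k : ℝ) ^ 5 ≤ (k : ℝ) ^ 8 := by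
    calc (1 + k : ℝ) ^ 5 ≤ (3 / 2 * (k : ℝ)) ^ 5 := by gcongr; linarith
      _ = (3 / 2) ^ 5 * (k : ℝ) ^ 5 := by ring
      _ ≤ (k : ℝ) ^ 3 * (k : ℝ) ^ 5 := by
        gcongr
        calc ((3 : ℝ) / 2) ^ 5 ≤ 2 ^ 3 := by norm_num
          _ ≤ (k : ℝ) ^ 3 := by gcongr
      _ = (k : ℝ) ^ 8 := by ring
  have h1 := Real.log_le_log (by positivity) hpow
  rw [Real.log_pow, Real.log_pow] at h1
  push_cast at h1
  have h2 : Real.log k = Real.logb 2 k * Real.log 2 := by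
    rw [Real.logb, div_mul_cancel₀]
    exact (Real.log_pos (by norm_num)).ne'
  have hL : 0 ≤ Real.logb 2 k := Real.logb_nonneg (by norm_num) (by linarith)
  have h3 := Real.log_two_lt_d9
  rw [h2] at h1
  nlinarith

/-- The logarithm in `p` makes the probability of missing a star of size `20000 √k` at most a high
negative power of `k`, and thus smaller than `p / 2`. -/
theorem miss_star_le (k D : ℕ) (hk : 1 < k) (p : ℝ) (hp : p = Real.logb 2 k / (1000 * √k))
    (hp1 : p ≤ 1) (hD : 20000 * √k ≤ D) : (1 - p) ^ D ≤ p / 2 := by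
  have hk2 : (2 : ℝ) ≤ k := by exact_mod_cast hk
  have hq : 0 < √(k : ℝ) := Real.sqrt_pos.2 (by linarith)
  have hqk : √(k : ℝ) ≤ k := by
    rw [Real.sqrt_le_left (by linarith)]; nlinarith
  have hL1 : 1 ≤ Real.logb 2 k := by
    rw [Real.le_logb_iff_rpow_le (by norm_num) (by linarith)]; simpa using hk2
  have hp0 : 0 < p := by rw [hp]; positivity
  have hpD : 20 * Real.logb 2 k ≤ p * D := by
    calc 20 * Real.logb 2 k = p * (20000 * √k) := by rw [hp]; field_simp; norm_num
      _ ≤ p * D := by gcongr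
  have h2 : Real.log k ≤ Real.logb 2 k := by
    rw [Real.logb, le_div_iff₀ (Real.log_pos (by norm_num))]
    have := Real.log_two_lt_d9
    have := Real.log_nonneg (x := k) (by linarith)
    nlinarith
  have hk12 : (2 : ℝ) ^ 12 ≤ k ^ 12 := by gcongr
  calc (1 - p) ^ D ≤ (Real.exp (-p)) ^ D := by
        have := Real.add_one_le_exp (-p)
        exact pow_le_pow_left₀ (by linarith) (by linarith) D
    _ = Real.exp (-(p * D)) := by rw [← Real.exp_nat_mul]; ring_nf
    _ ≤ Real.exp (-(13 * Real.log k)) := by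
        apply Real.exp_le_exp.2; linarith
    _ = ((k : ℝ) ^ 13)⁻¹ := by
        rw [Real.exp_neg]
        congr 1
        have := Real.exp_nat_mul (Real.log k) 13
        rw [Real.exp_log (by linarith)] at this
        exact_mod_cast this
    _ ≤ 1 / (2000 * k) := by
        rw [inv_eq_one_div]
        apply one_div_le_one_div_of_le (by positivity)
        calc (2000 * k : ℝ) ≤ k ^ 12 * k := by gcongr; linarith
          _ = k ^ 13 := by ring
    _ ≤ p / 2 := by
        rw [hp, div_div, div_le_div_iff₀ (by positivity) (by positivity)]
        nlinarith

/-! ### The rainbow cycle -/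

theorem rainbow_cycle_of_n_add_k_colors_large_n {V : Type*} [Fintype V] [DecidableEq V]
    (n k : ℕ) (hk : 1 < k) (hn : Fintype.card V = n)
    (hlarge : 140 * (k : ℝ) ^ ((3 : ℝ) / 2) / Real.logb 2 k ≤ (n : ℝ))
    (G : SimpleGraph V) [DecidableRel G.Adj] (b : Sym2 V → ℕ)
    (hsize : ∀ i, 1 ≤ i → i ≤ n + k →
      10 ^ 9 * k ≤ (G.edgeFinset.filter (fun e => b e = i)).card)
    (hempty : ∀ i, n + k < i → G.edgeFinset.filter (fun e => b e = i) = ∅) :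
    ∃ (u : V) (w : G.Walk u u), w.IsCycle ∧ (w.edges.map b).Nodup ∧
      (w.length : ℝ) ≤ (n : ℝ) * (Real.logb 2 k) ^ 2 / (5 * (k : ℝ) ^ ((3 : ℝ) / 2)) := by
  subst hn
  set n := Fintype.card V with hn
  have hk2 : (2 : ℝ) ≤ k := by exact_mod_cast hk
  have hk0 : (0 : ℝ) < k := by linarith
  set L := Real.logb 2 k with hL
  set q := √(k : ℝ) with hq
  have hq0 : 0 < q := Real.sqrt_pos.2 hk0
  have hqq : q * q = k := Real.mul_self_sqrt hk0.le
  have hq1 : 1 ≤ q := by nlinarith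
  have hL1 : 1 ≤ L := by
    rw [hL, Real.le_logb_iff_rpow_le (by norm_num) hk0]; simpa using hk2
  -- `log₂ k = 2 ln √k / ln 2 < 4 √k`
  have hLq : L ≤ 4 * q := by
    have h1 : Real.log k = 2 * Real.log q := by
      rw [← hqq, Real.log_mul hq0.ne' hq0.ne']; ring
    have h2 := Real.log_le_sub_one_of_pos hq0
    have h3 := Real.log_two_gt_d9
    rw [hL, Real.logb, div_le_iff₀ (by linarith), h1]
    nlinarith
  have hpow : (k : ℝ) ^ ((3 : ℝ) / 2) = k * q := by
    rw [show (3 : ℝ) / 2 = 1 + 1 / 2 by norm_num, Real.rpow_add hk0, Real.rpow_one, hq,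
      Real.sqrt_eq_rpow]
  rw [hpow] at hlarge ⊢
  have hlarge' : 140 * (k * q) ≤ n * L := by rwa [div_le_iff₀ (by linarith)] at hlarge
  have hkn : (k : ℝ) ≤ n := by
    have : (k : ℝ) * L ≤ n * L := by nlinarith
    exact le_of_mul_le_mul_right this (by linarith)
  set p : ℝ := L / (1000 * q) with hp
  have hp0 : 0 < p := by positivity
  have hp1 : p ≤ 1 := by rw [hp, div_le_one (by positivity)]; linarith
  have hpq : p * q = L / 1000 := by rw [hp]; field_simp
  set D : ℕ := ⌈20000 * q⌉₊ with hD
  have hD1 : 20000 * q ≤ D := Nat.le_ceil _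
  have hD2 : (D : ℝ) ≤ 30000 * q := by
    have := Nat.ceil_lt_add_one (a := 20000 * q) (by positivity)
    rw [← hD] at this
    linarith
  set s : ℝ := p * n with hs
  have hs0 : 0 ≤ s := by positivity
  set ν : ℕ := ⌈10 / 9 * (s + k)⌉₊ with hν
  have hν1 : 10 / 9 * (s + k) ≤ ν := Nat.le_ceil _
  have hν2 : (ν : ℝ) < 10 / 9 * (s + k) + 1 := Nat.ceil_lt_add_one (by positivity)
  have hcol : ∀ c ∈ Finset.Icc 1 (n + k),
      10 * (1 + 2 * D * p) ≤ ((G.edgeFinset.filter (fun e => b e = c)).card : ℝ) * p ^ 2 := by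
    intro c hc
    obtain ⟨hc1, hc2⟩ := Finset.mem_Icc.1 hc
    have h1 : (10 ^ 9 * k : ℝ) ≤ (G.edgeFinset.filter (fun e => b e = c)).card := by
      exact_mod_cast hsize c hc1 hc2
    have h2 : (10 ^ 9 * k : ℝ) * p ^ 2 = 1000 * L ^ 2 := by
      rw [← hqq, show (10 ^ 9 * (q * q) : ℝ) * p ^ 2 = 10 ^ 9 * (p * q) ^ 2 by ring, hpq]; ring
    have h3 : (D : ℝ) * p ≤ 30 * L := by
      calc (D : ℝ) * p ≤ 30000 * q * p := by gcongr
        _ = 30000 * (p * q) := by ring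
        _ = 30 * L := by rw [hpq]; ring
    have h4 : (10 ^ 9 * k : ℝ) * p ^ 2 ≤
        ((G.edgeFinset.filter (fun e => b e = c)).card : ℝ) * p ^ 2 := by gcongr
    nlinarith
  have hbad : ((n : ℝ) + k) * (1 - p) ^ D ≤ p * n := by
    have h1 := miss_star_le k D hk p hp hp1 hD1
    calc ((n : ℝ) + k) * (1 - p) ^ D ≤ (n + n) * (p / 2) := by gcongr
      _ = p * n := by ring
  obtain ⟨S, C, hSC, hC, hScard⟩ := exists_good_set G b k (by omega) p hp0 hp1 D ν
    (Nat.ceil_pos.2 (by positivity)) (by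
      intro c hc
      convert hcol c hc) hbad (by rw [← hn, ← hs]; linarith)
  obtain ⟨u, w, hw1, hw2, hw3⟩ := exists_rainbow_cycle_of_set G b S C k (by omega) hSC hC
  refine ⟨u, w, hw1, hw2, hw3.trans ?_⟩
  -- The length is at most `2 * 1.11 * L * (14 * s / k + 9.8) + 1`; in terms of the target `X` the
  -- first part is `0.1554 * X`, and the rest is below `22.8 * L`, where `28 * L ≤ X`.
  set X : ℝ := n * L ^ 2 / (5 * (k * q)) with hX
  have hX28 : 28 * L ≤ X := by
    rw [hX, le_div_iff₀ (by positivity)]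
    nlinarith
  have hsX : s / k * L = X / 200 := by
    rw [hs, hp, hX]; field_simp; ring
  have hSk : (S.card : ℝ) / k ≤ 14 * (s / k) + 8.8 := by
    have : 14 * (s / k) + 8.8 = (14 * s + 8.8 * k) / k := by field_simp
    rw [this]
    gcongr
    rw [← hn, ← hs] at hScard
    linarith
  have hlog := log_one_add_le k hk
  rw [← hL] at hlog
  have hsk0 : 0 ≤ s / k := by positivity
  have h1 : Real.log (1 + k) * (S.card / k + 1) ≤ 1.11 * L * (14 * (s / k) + 8.8 + 1) := by
    gcongr
  have h2 : 1.11 * L * (14 * (s / k) + 8.8 + 1) = 15.54 * (s / k * L) + 10.878 * L := by ring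
  rw [h2, hsX] at h1
  linarith
end

section
/- Let k > 1 be an integer and let G be a simple graph on n vertices. Suppose the edges of G are colored with n + k color classes, each of size at least 10^9 · k, and suppose additionally that 140·k^(10/9) ≥ n. Then G contains a rainbow cycle of length at most 6. -/
/-!
The proof in fact finds a rainbow 4-cycle. Let `C` be the set of the `n + k` colors, and fix `s`
minimal with `k * s ^ 2 > 2 * n ^ 2`. Call a color a *star color* if some vertex is incident with at
least `s` edges of that color, and choose such a vertex `f c` as the center of each star color `c`.
Choose also one star color `r v` centered at `v` for every vertex `v` that is a center. At most `n`
star colors are of the form `r v`, so either at least `k / 2` star colors are not, or at least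
`k / 2` colors are not star colors.

* In the first case (`exists_rainbow_of_star_colors`), each such color `c` gives at least `s ^ 2`
  pairs `(x, y)` where `x` is joined to `f c` in color `c` and `y` is joined to `f c` in color
  `r (f c)`. As `(k / 2) * s ^ 2 > n ^ 2`, two colors `c ≠ c'` share a pair `(x, y)`, and
  `f c, x, f c', y` is a rainbow cycle.
* In the second case (`sq_le_of_no_rainbow`), consider the graph of all edges whose color is not a
  star color. If there is no rainbow 4-cycle, any two vertices `u, w` are joined by at most `4 * s`
  rainbow paths of length two: every such path shares a color at `u` or at `w` with a fixed one.
  Convexity gives at least `M ^ 2 / n - s * M` such paths in total, where `M` is the degree sum, so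
  `M ^ 2 ≤ n * (4 * s * n ^ 2 + s * M)`. Since `M` is at least of order `10 ^ 9 * k ^ 2 / 2`, this
  forces `n ^ 8` to be larger than `140 ^ 8 * k ^ 9`, contrary to the hypothesis on `n`.
-/

namespace RainbowFour

open Finset

variable {V : Type*} [Fintype V] [DecidableEq V] (G : SimpleGraph V) [DecidableRel G.Adj]
  (b : Sym2 V → ℕ)

/-- A rainbow 4-cycle `u v w x`, described by its vertices and the colors of its edges. -/
def HasRainbowFour : Prop :=
  ∃ u v w x : V, G.Adj u v ∧ G.Adj v w ∧ G.Adj w x ∧ G.Adj x u ∧ u ≠ w ∧ v ≠ x ∧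
    [b s(u, v), b s(v, w), b s(w, x), b s(x, u)].Nodup

/-- The neighbors of `v` along edges of color `c`. -/
def nbr (c : ℕ) (v : V) : Finset V := univ.filter fun u => G.Adj v u ∧ b s(v, u) = c

/-- The neighbors of `v` along edges with color in `C`. -/
def nbrs (C : Finset ℕ) (v : V) : Finset V := univ.filter fun u => G.Adj v u ∧ b s(v, u) ∈ C

variable {G b}

omit [Fintype V] [DecidableEq V] [DecidableRel G.Adj] in
lemma HasRainbowFour.exists_walk (h : HasRainbowFour G b) :
    ∃ (u : V) (w : G.Walk u u), w.IsCycle ∧ (w.edges.map b).Nodup ∧ w.length ≤ 6 := by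
  obtain ⟨u, v, w, x, h1, h2, h3, h4, huw, hvx, hb⟩ := h
  refine ⟨u, .cons h1 (.cons h2 (.cons h3 (.cons h4 .nil))), ?_, by simpa using hb, by simp⟩
  have := h1.ne
  have := h2.ne
  have := h3.ne
  have := h4.ne
  rw [SimpleGraph.Walk.cons_isCycle_iff]
  refine ⟨?_, ?_⟩
  · simp only [SimpleGraph.Walk.cons_isPath_iff, SimpleGraph.Walk.support_cons,
      SimpleGraph.Walk.support_nil, SimpleGraph.Walk.IsPath.nil, List.mem_cons]
    grind
  · simp only [SimpleGraph.Walk.edges_cons, SimpleGraph.Walk.edges_nil, List.mem_cons,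
      Sym2.eq_iff]
    grind

omit [DecidableEq V] in
lemma mem_nbr {c : ℕ} {u v : V} : u ∈ nbr G b c v ↔ G.Adj v u ∧ b s(v, u) = c := by
  simp [nbr]

omit [DecidableEq V] in
lemma mem_nbrs {C : Finset ℕ} {u v : V} :
    u ∈ nbrs G b C v ↔ G.Adj v u ∧ b s(v, u) ∈ C := by
  simp [nbrs]

lemma exists_rainbow_of_star_colors (C : Finset ℕ) (f : ℕ → V) (s : ℕ)
    (hf : ∀ c ∈ C, s ≤ (nbr G b c (f c)).card) (r : V → ℕ)
    (hr : ∀ c ∈ C, r (f c) ∈ C ∧ f (r (f c)) = f c)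
    (hlarge : Fintype.card V ^ 2 < (C.filter fun c => c ≠ r (f c)).card * s ^ 2) :
    HasRainbowFour G b := by
  by_contra hno
  set E := C.filter fun c => c ≠ r (f c) with hE
  have hdisj : (E : Set ℕ).PairwiseDisjoint
      fun c => nbr G b c (f c) ×ˢ nbr G b (r (f c)) (f c) := by
    intro c hc c' hc' hcc
    rw [Function.onFun, Finset.disjoint_left]
    rintro ⟨x, y⟩ h h'
    simp only [hE, coe_filter, Set.mem_ofPred_eq] at hc hc'
    simp only [mem_product, mem_nbr] at h h'
    obtain ⟨⟨a1, b1⟩, a2, b2⟩ := h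
    obtain ⟨⟨a3, b3⟩, a4, b4⟩ := h'
    have hne : f c ≠ f c' := by
      intro e
      rw [e] at b1
      exact hcc (b1.symm.trans b3)
    have hxy : x ≠ y := by
      rintro rfl
      exact hc.2 (b1.symm.trans b2)
    have hc1 := hr c hc.1
    have hc2 := hr c' hc'.1
    refine hno ⟨f c, x, f c', y, a1, a3.symm, a4, a2.symm, hne, hxy, ?_⟩
    rw [Sym2.eq_swap (a := x), Sym2.eq_swap (a := y), b1, b2, b3, b4]
    simp only [List.nodup_cons, List.mem_cons, List.not_mem_nil, or_false, not_or,
      not_false_eq_true, List.nodup_nil, and_true]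
    grind
  have h1 := card_biUnion (s := E) hdisj
  have h2 : (E.biUnion fun c => nbr G b c (f c) ×ˢ nbr G b (r (f c)) (f c)).card
      ≤ Fintype.card V ^ 2 := by
    refine (card_le_univ _).trans ?_
    rw [Fintype.card_prod, sq]
  have h3 : E.card * s ^ 2 ≤ ∑ c ∈ E, (nbr G b c (f c) ×ˢ nbr G b (r (f c)) (f c)).card := by
    rw [← smul_eq_mul]
    refine card_nsmul_le_sum _ _ _ fun c hc => ?_
    have hc := (mem_filter.1 hc).1
    have hc1 := hr c hc
    have h4 := hf _ hc1.1
    rw [hc1.2] at h4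
    rw [card_product, sq]
    exact Nat.mul_le_mul (hf c hc) h4
  omega

/-- Two vertices have few rainbow common neighbors when there is no rainbow 4-cycle: a common
neighbor must repeat, at `u` or at `w`, one of the two colors seen by a fixed one. -/
lemma card_common_le (hno : ¬ HasRainbowFour G b) (C : Finset ℕ) (s : ℕ)
    (hs : ∀ c ∈ C, ∀ v, (nbr G b c v).card ≤ s) (u w : V) :
    (univ.filter fun v => u ∈ nbrs G b C v ∧ w ∈ nbrs G b C v ∧ b s(v, u) ≠ b s(v, w)).card
      ≤ 4 * s := by
  set P := univ.filter fun v =>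
    u ∈ nbrs G b C v ∧ w ∈ nbrs G b C v ∧ b s(v, u) ≠ b s(v, w) with hP
  rcases P.eq_empty_or_nonempty with h | ⟨v₀, hv₀⟩
  · simp [h]
  simp only [hP, mem_filter, mem_univ, true_and, mem_nbrs] at hv₀
  obtain ⟨⟨p1, p2⟩, ⟨p3, p4⟩, p5⟩ := hv₀
  have hsub : P ⊆ (nbr G b (b s(v₀, u)) u ∪ nbr G b (b s(v₀, w)) w) ∪
      (nbr G b (b s(v₀, w)) u ∪ nbr G b (b s(v₀, u)) w) := by
    intro v hv
    simp only [hP, mem_filter, mem_univ, true_and, mem_nbrs] at hv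
    obtain ⟨⟨q1, q2⟩, ⟨q3, q4⟩, q5⟩ := hv
    by_contra hcon
    simp only [mem_union, mem_nbr, q1.symm, q3.symm, true_and, not_or,
      Sym2.eq_swap (b := v)] at hcon
    have huw : u ≠ w := by
      rintro rfl
      exact q5 rfl
    have hvv : v₀ ≠ v := by
      rintro rfl
      exact hcon.1.1 rfl
    refine hno ⟨u, v₀, w, v, p1.symm, p3, q3.symm, q1, huw, hvv, ?_⟩
    rw [Sym2.eq_swap (a := u), Sym2.eq_swap (a := w)]
    simp only [List.nodup_cons, List.mem_cons, List.not_mem_nil, or_false, not_or,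
      not_false_eq_true, List.nodup_nil, and_true]
    grind
  have h1 := card_le_card hsub
  have h2 := card_union_le (nbr G b (b s(v₀, u)) u ∪ nbr G b (b s(v₀, w)) w)
    (nbr G b (b s(v₀, w)) u ∪ nbr G b (b s(v₀, u)) w)
  have h3 := card_union_le (nbr G b (b s(v₀, u)) u) (nbr G b (b s(v₀, w)) w)
  have h4 := card_union_le (nbr G b (b s(v₀, w)) u) (nbr G b (b s(v₀, u)) w)
  have h5 := hs _ p2 u
  have h6 := hs _ p4 w
  have h7 := hs _ p4 u
  have h8 := hs _ p2 w
  omega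

/-- Double counting of rainbow paths of length two, by their middle vertex and by their ends. -/
lemma sq_le_of_no_rainbow (hno : ¬ HasRainbowFour G b) (C : Finset ℕ) (s : ℕ)
    (hs : ∀ c ∈ C, ∀ v, (nbr G b c v).card ≤ s) :
    (∑ v, (nbrs G b C v).card) ^ 2 ≤ Fintype.card V *
      (4 * s * Fintype.card V ^ 2 + s * ∑ v, (nbrs G b C v).card) := by
  have hcs := sq_sum_le_card_mul_sum_sq (s := (univ : Finset V))
    (f := fun v => (nbrs G b C v).card)
  rw [card_univ] at hcs
  refine hcs.trans (Nat.mul_le_mul_left _ ?_)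
  have h1 : ∀ v, (nbrs G b C v).card ^ 2 ≤ (∑ u, ∑ w,
      if u ∈ nbrs G b C v ∧ w ∈ nbrs G b C v ∧ b s(v, u) ≠ b s(v, w) then 1 else 0)
      + s * (nbrs G b C v).card := by
    intro v
    have h2 : ∀ u ∈ nbrs G b C v, (nbrs G b C v).card ≤
        (∑ w, if u ∈ nbrs G b C v ∧ w ∈ nbrs G b C v ∧ b s(v, u) ≠ b s(v, w) then 1 else 0)
        + s := by
      intro u hu
      have h3 := hs _ (mem_nbrs.1 hu).2 v
      rw [← card_filter]
      refine le_trans ?_ (Nat.add_le_add_left h3 _)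
      refine le_trans (card_le_card ?_) (card_union_le _ _)
      intro w hw
      have hw' := mem_nbrs.1 hw
      simp only [mem_union, mem_filter, mem_univ, true_and, mem_nbr]
      tauto
    have h4 := sum_le_sum h2
    rw [sum_const, smul_eq_mul, sum_add_distrib, sum_const, smul_eq_mul] at h4
    have h5 := sum_le_sum_of_subset (f := fun u =>
      ∑ w, if u ∈ nbrs G b C v ∧ w ∈ nbrs G b C v ∧ b s(v, u) ≠ b s(v, w) then 1 else 0)
      (subset_univ (nbrs G b C v))
    rw [sq, mul_comm s]
    omega
  have h6 := sum_le_sum fun v (_ : v ∈ (univ : Finset V)) => h1 v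
  rw [sum_add_distrib, ← mul_sum] at h6
  refine h6.trans (Nat.add_le_add_right ?_ _)
  rw [sum_comm]
  have h7 : ∀ u : V, (∑ v, ∑ w,
      if u ∈ nbrs G b C v ∧ w ∈ nbrs G b C v ∧ b s(v, u) ≠ b s(v, w) then 1 else 0)
      ≤ Fintype.card V * (4 * s) := by
    intro u
    rw [sum_comm, ← card_univ, ← smul_eq_mul]
    refine sum_le_card_nsmul _ _ _ fun w _ => ?_
    rw [← card_filter]
    exact card_common_le hno C s hs u w
  refine (sum_le_card_nsmul _ _ _ fun u _ => h7 u).trans (le_of_eq ?_)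
  rw [smul_eq_mul, card_univ]
  ring

/-- Large color classes force a large degree sum. Each edge is counted at least once, which loses
a factor of two. -/
lemma card_mul_le_sum (C : Finset ℕ) (D : ℕ)
    (hD : ∀ c ∈ C, D ≤ (G.edgeFinset.filter fun e => b e = c).card) :
    C.card * D ≤ ∑ v, (nbrs G b C v).card := by
  have h1 : C.card * D ≤ (G.edgeFinset.filter fun e => b e ∈ C).card := by
    rw [card_eq_sum_card_fiberwise (f := b) (t := C) (fun e he => by simpa using (mem_filter.1 he).2),
      ← smul_eq_mul]
    refine card_nsmul_le_sum _ _ _ fun c hc => (hD c hc).trans (card_le_card ?_)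
    intro e he
    simp only [mem_filter] at he ⊢
    exact ⟨⟨he.1, he.2 ▸ hc⟩, he.2⟩
  refine h1.trans ?_
  rw [← card_sigma]
  refine le_trans (card_le_card (t := (univ.sigma fun v => nbrs G b C v).image
    fun p => s(p.1, p.2)) ?_) card_image_le
  intro e
  induction e with
  | h x y =>
    intro he
    simp only [mem_filter, SimpleGraph.mem_edgeFinset, SimpleGraph.mem_edgeSet] at he
    exact mem_image.2 ⟨⟨x, y⟩, by simp [mem_nbrs, he], rfl⟩

/-- The only consequence of `n ≤ 140 * k ^ (10 / 9)` that is needed. -/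
lemma pow_bound (n k : ℕ) (hk : 1 < k)
    (h : (n : ℝ) ≤ 140 * (k : ℝ) ^ ((10 : ℝ) / 9)) : n ^ 8 ≤ 140 ^ 8 * k ^ 9 := by
  have hk1 : (1 : ℝ) ≤ k := by exact_mod_cast hk.le
  have h1 : (n : ℝ) ^ 8 ≤ (140 * (k : ℝ) ^ ((10 : ℝ) / 9)) ^ 8 := by gcongr
  have h2 : ((k : ℝ) ^ ((10 : ℝ) / 9)) ^ 8 ≤ (k : ℝ) ^ 9 := by
    rw [← Real.rpow_natCast, ← Real.rpow_mul (by positivity), ← Real.rpow_natCast]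
    exact Real.rpow_le_rpow_of_exponent_le hk1 (by norm_num)
  rw [mul_pow] at h1
  have h3 : (n : ℝ) ^ 8 ≤ 140 ^ 8 * (k : ℝ) ^ 9 := h1.trans (by gcongr)
  exact_mod_cast h3

/-- The parameters rule out the inequality of `sq_le_of_no_rainbow`. -/
lemma numeric_contradiction (n k s M : ℕ) (hk : 1 < k) (hn : n ^ 8 ≤ 140 ^ 8 * k ^ 9)
    (hs : k * (s - 1) ^ 2 ≤ 2 * n ^ 2) (hs1 : 1 ≤ s) (hM : 10 ^ 9 * k ^ 2 ≤ 2 * M)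
    (hMn : M ≤ n ^ 2) (h : M ^ 2 ≤ n * (4 * s * n ^ 2 + s * M)) : False := by
  obtain ⟨t, rfl⟩ : ∃ t, s = t + 1 := ⟨s - 1, by omega⟩
  rw [Nat.add_sub_cancel] at hs
  have h1 : M ^ 2 ≤ 5 * (t + 1) * n ^ 3 := by
    calc M ^ 2 ≤ n * (4 * (t + 1) * n ^ 2 + (t + 1) * M) := h
      _ ≤ n * (4 * (t + 1) * n ^ 2 + (t + 1) * n ^ 2) := by gcongr
      _ = _ := by ring
  have hkn : k ≤ n ^ 2 := by nlinarith
  have h2 : k * (t + 1) ^ 2 ≤ 6 * n ^ 2 := by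
    have : (t + 1) ^ 2 ≤ 2 * t ^ 2 + 2 := by
      zify
      nlinarith [sq_nonneg ((t : ℤ) - 1)]
    calc k * (t + 1) ^ 2 ≤ k * (2 * t ^ 2 + 2) := by gcongr
      _ = 2 * (k * t ^ 2) + 2 * k := by ring
      _ ≤ _ := by omega
  have h3 : (10 ^ 9 * k ^ 2) ^ 4 ≤ 400 * ((t + 1) ^ 2 * n ^ 6) := by
    calc (10 ^ 9 * k ^ 2) ^ 4 ≤ (2 * M) ^ 4 := by gcongr
      _ = 16 * (M ^ 2) ^ 2 := by ring
      _ ≤ 16 * (5 * (t + 1) * n ^ 3) ^ 2 := by gcongr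
      _ = _ := by ring
  have h4 : 10 ^ 36 * k ^ 9 ≤ 2400 * 140 ^ 8 * k ^ 9 := by
    calc 10 ^ 36 * k ^ 9 = k * (10 ^ 9 * k ^ 2) ^ 4 := by ring
      _ ≤ k * (400 * ((t + 1) ^ 2 * n ^ 6)) := by gcongr
      _ = 400 * n ^ 6 * (k * (t + 1) ^ 2) := by ring
      _ ≤ 400 * n ^ 6 * (6 * n ^ 2) := by gcongr
      _ = 2400 * n ^ 8 := by ring
      _ ≤ 2400 * (140 ^ 8 * k ^ 9) := by gcongr
      _ = _ := by ring
  have h5 : 0 < k ^ 9 := by positivity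
  have h6 := Nat.le_of_mul_le_mul_right h4 h5
  norm_num at h6

end RainbowFour

open RainbowFour Finset in

/-- Let `k > 1` be an integer and let `G` be a simple graph on `n`
vertices. Suppose the edges of `G` are colored with `n + k` color classes, each of size
at least `10^9 * k`, and suppose additionally that `140 * k^(10/9) ≥ n`. Then `G`
contains a rainbow cycle of length at most `6`. -/
theorem rainbow_cycle_of_n_add_k_colors_small_n {V : Type*} [Fintype V] [DecidableEq V]
    (n k : ℕ) (hk : 1 < k) (hn : Fintype.card V = n)
    (hsmall : (n : ℝ) ≤ 140 * (k : ℝ) ^ ((10 : ℝ) / 9))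
    (G : SimpleGraph V) [DecidableRel G.Adj] (b : Sym2 V → ℕ)
    (hsize : ∀ i, 1 ≤ i → i ≤ n + k →
      10 ^ 9 * k ≤ (G.edgeFinset.filter (fun e => b e = i)).card)
    (hempty : ∀ i, n + k < i → G.edgeFinset.filter (fun e => b e = i) = ∅) :
    ∃ (u : V) (w : G.Walk u u), w.IsCycle ∧ (w.edges.map b).Nodup ∧ w.length ≤ 6 := by
  classical
  refine HasRainbowFour.exists_walk (G := G) (b := b) ?_
  by_contra hno
  have hpow := pow_bound n k hk hsmall
  -- The threshold is minimal with `2 * n ^ 2 < k * s ^ 2`.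
  obtain ⟨s, hs1, hslow, hsup⟩ : ∃ s, 1 ≤ s ∧ k * (s - 1) ^ 2 ≤ 2 * n ^ 2 ∧
      2 * n ^ 2 < k * s ^ 2 := by
    refine ⟨Nat.sqrt (2 * n ^ 2 / k) + 1, by omega, ?_, ?_⟩
    · rw [Nat.add_sub_cancel]
      exact (Nat.mul_le_mul_left k (Nat.sqrt_le' _)).trans (Nat.mul_div_le _ _)
    · rw [mul_comm k]
      exact (Nat.div_lt_iff_lt_mul (Nat.zero_lt_of_lt hk)).1 (Nat.lt_succ_sqrt' _)
  set A := Finset.Icc 1 (n + k) with hA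
  set C₁ := A.filter fun c => ∃ v, s ≤ (nbr G b c v).card with hC₁
  set C₂ := A.filter fun c => ¬ ∃ v, s ≤ (nbr G b c v).card with hC₂
  have hcard : C₁.card + C₂.card = n + k := by
    rw [hC₁, hC₂, card_filter_add_card_filter_not, hA, Nat.card_Icc]
    omega
  by_cases h2 : k ≤ 2 * C₂.card
  · have hs : ∀ c ∈ C₂, ∀ v, (nbr G b c v).card ≤ s := by
      intro c hc v
      by_contra hlt
      exact (mem_filter.1 hc).2 ⟨v, by omega⟩
    have hD := card_mul_le_sum (G := G) (b := b) C₂ (10 ^ 9 * k) fun c hc => by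
      have := mem_Icc.1 (mem_filter.1 hc).1
      exact hsize c this.1 this.2
    have hsq := sq_le_of_no_rainbow hno C₂ s hs
    have hMn : ∑ v, (nbrs G b C₂ v).card ≤ n ^ 2 := by
      refine (sum_le_card_nsmul _ _ n fun v _ => ?_).trans (le_of_eq ?_)
      · rw [← hn]
        exact card_le_univ _
      · rw [card_univ, hn, smul_eq_mul, sq]
    rw [hn] at hsq
    exact numeric_contradiction n k s _ hk hpow hslow hs1 (by nlinarith) hMn hsq
  · have hex : ∀ c ∈ C₁, ∃ v, s ≤ (nbr G b c v).card := fun c hc => (mem_filter.1 hc).2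
    obtain ⟨c₀, hc₀⟩ : C₁.Nonempty := card_pos.1 (by omega)
    have : Nonempty V := ⟨(hex c₀ hc₀).choose⟩
    choose! f hf using hex
    set r := Function.invFunOn f (C₁ : Set ℕ) with hr
    have hr' : ∀ c ∈ C₁, r (f c) ∈ C₁ ∧ f (r (f c)) = f c := fun c hc =>
      Function.invFunOn_pos ⟨c, hc, rfl⟩
    -- The chosen representatives `r v` are determined by their centers.
    have hrep : (C₁.filter fun c => ¬ c ≠ r (f c)).card ≤ n := by
      rw [← hn]
      refine card_le_card_of_injOn (t := univ) f (fun _ _ => by simp) ?_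
      intro c hc c' hc' h
      simp only [coe_filter, Set.mem_ofPred_eq, not_not] at hc hc'
      rw [hc.2, hc'.2, h]
    have hsplit := card_filter_add_card_filter_not (s := C₁) fun c => c ≠ r (f c)
    have hE : k ≤ 2 * (C₁.filter fun c => c ≠ r (f c)).card := by omega
    refine hno (exists_rainbow_of_star_colors C₁ f s hf r hr' ?_)
    rw [hn]
    have := Nat.mul_le_mul_right (s ^ 2) hE
    nlinarith
end
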